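/- There exists a constant c > 0 such that for all sufficiently large t, the on-line Ramsey number of the complete graph K_t satisfies r̃(t) ≤ t^{-c·(log t)/(log log t)} · 4^t, where log denotes the natural logarithm. -/

import Mathlib

/-- A monochromatic clique of size `k` in colour `i` for an edge-colouring `c` of `K_n`. -/
def monoClique {n q : ℕ} (c : Sym2 (Fin n) → Fin q) (i : Fin q) (k : ℕ) : Prop :=
  ∃ A : Finset (Fin n), A.card = k ∧ ∀ u ∈ A, ∀ v ∈ A, u ≠ v → c s(u, v) = i

/-- The `q`-colour Ramsey number `r(k 0, …, k (q-1))`. -/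
noncomputable def ramseyQ {q : ℕ} (k : Fin q → ℕ) : ℕ :=
  sInf {n : ℕ | ∀ c : Sym2 (Fin n) → Fin q, ∃ i : Fin q, monoClique c i (k i)}

/-- The two-colour Ramsey number `r(s, t)`. -/
noncomputable def ramsey2 (s t : ℕ) : ℕ := ramseyQ ![s, t]

/-- A history in the on-line Ramsey game: the previously presented edges with their colours. -/
abbrev History (q : ℕ) := List (Sym2 ℕ × Fin q)

/-- A Builder strategy is valid if it always presents a genuine new edge. -/
def validBuilder {q : ℕ} (B : History q → Sym2 ℕ) : Prop :=
  ∀ h : History q, ¬ (B h).IsDiag ∧ B h ∉ h.map Prod.fst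

/-- The play determined by a Builder strategy `B` and a Painter strategy `P`:
`play B P n` is the history after `n` rounds. -/
def play {q : ℕ} (B : History q → Sym2 ℕ) (P : History q → Sym2 ℕ → Fin q) : ℕ → History q
  | 0 => []
  | n + 1 =>
      let h := play B P n
      h ++ [(B h, P h (B h))]

/-- The graph formed by the edges of colour `i` in a history. -/
def colourGraph {q : ℕ} (h : History q) (i : Fin q) : SimpleGraph ℕ :=
  SimpleGraph.fromEdgeSet {e | (e, i) ∈ h}

/-- `H` contains a copy of `G` as a subgraph. -/
def containsCopy {V : Type*} (G : SimpleGraph V) (H : SimpleGraph ℕ) : Prop :=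
  ∃ f : V → ℕ, Function.Injective f ∧ ∀ u v, G.Adj u v → H.Adj (f u) (f v)

/-- The `q`-colour on-line Ramsey number of `G`: the least `N` such that Builder has a
valid strategy forcing, against every Painter strategy, a monochromatic copy of `G`
within at most `N` rounds. -/
noncomputable def onlineRamsey {V : Type*} (q : ℕ) (G : SimpleGraph V) : ℕ :=
  sInf {N : ℕ | ∃ B : History q → Sym2 ℕ, validBuilder B ∧
    ∀ P : History q → Sym2 ℕ → Fin q,
      ∃ n ≤ N, ∃ i : Fin q, containsCopy G (colourGraph (play B P n) i)}

/-!
Builder keeps a book whose spines are monochromatic cliques, one in each colour, joined to all of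
its pages in their own colours. Joining one page to all the others and passing to its majority
colour adds a vertex to a spine and halves the number of pages. After `t` such steps the
sizes `k 0`, `k 1` still missing from the spines add up to `t`, so Builder may present all remaining
edges as soon as the number of pages reaches the off-diagonal Ramsey number `r(k 0, k 1)`. If these
numbers are at most `r`, the whole game lasts `O(2 ^ t * r + r ^ 2)` rounds.

It remains to gain an exponential factor over `r(k 0, k 1) ≤ 2 ^ (k 0 + k 1)`, uniformly in the
sizes. If `k 0` and `k 1` are far apart, the Erdős–Szekeres bound `(k 0 + k 1).choose (k 0)` is
already small enough. If they are close, one passes to neighbourhoods of density at least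
`1 / 2 + η`, each gaining a constant factor; should there be none, all degrees in both colours have
density nearly `1 / 2`, and the multicolour book algorithm finds a long spine with almost as many
pages as in a random colouring. This spine unbalances the sizes that remain to be found, and the
Erdős–Szekeres bound applies to the pages.

The book algorithm keeps, for each colour, a set of pages into which every vertex of a common
reservoir has high density. Each step chooses a vertex `x` whose neighbourhoods in the sets of
pages are correlated with those of many other vertices: a geometric lemma for two positive
semidefinite matrices ensures that no correlation is very negative, and that a large one in some
colour is paid for by a moderate loss in the reservoir. A large correlation boosts the density;
otherwise `x` joins a spine.
-/

open Filter Finset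
open scoped Matrix

/-! ### A geometric lemma on pairs of positive semidefinite matrices -/

section Geometric

open Matrix

lemma posSemidef_map_pow {ι : Type*} [Finite ι] {A : Matrix ι ι ℝ}
    (hA : A.PosSemidef) (n : ℕ) : (A.map (· ^ n)).PosSemidef := by
  cases nonempty_fintype ι
  induction n with
  | zero =>
    convert posSemidef_vecMulVec_self_star (1 : ι → ℝ) using 1
    ext i j
    simp [vecMulVec_apply]
  | succ n ih =>
    have hsucc : A.map (· ^ (n + 1)) = A.map (· ^ n) ⊙ A := by
      ext i j
      simp [pow_succ]
    rw [hsucc]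
    exact ih.hadamard hA

variable {ι : Type*} [Fintype ι] {A B : Matrix ι ι ℝ}

lemma sum_entries_nonneg_of_posSemidef (hA : A.PosSemidef) : 0 ≤ ∑ z : ι × ι, A z.1 z.2 := by
  simpa [dotProduct, mulVec, Fintype.sum_prod_type] using hA.dotProduct_mulVec_nonneg 1

/-- The entire function `∑ xⁿ / (2n)!`, which is `cosh √x` for `0 ≤ x` and `cos √(-x)` for
`x ≤ 0`. Nonnegativity of its Taylor coefficients lets it act entrywise on positive semidefinite
matrices, while it stays bounded on the negative half-line. -/
noncomputable def coshSqrt (x : ℝ) : ℝ := if 0 ≤ x then Real.cosh √x else Real.cos √(-x)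

lemma hasSum_coshSqrt (x : ℝ) : HasSum (fun n : ℕ => x ^ n / ((2 * n).factorial : ℝ))
    (coshSqrt x) := by
  unfold coshSqrt
  split_ifs with hx
  · simpa [pow_mul, Real.sq_sqrt hx] using Real.hasSum_cosh √x
  · have hx' : 0 ≤ -x := by linarith
    simpa only [pow_mul, Real.sq_sqrt hx', ← mul_pow, neg_mul_neg, one_mul]
      using Real.hasSum_cos √(-x)

lemma abs_coshSqrt_le_one {x : ℝ} (hx : x ≤ 0) : |coshSqrt x| ≤ 1 := by
  unfold coshSqrt
  split_ifs with h
  · simp [le_antisymm hx h]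
  · exact Real.abs_cos_le_one _

lemma one_add_half_le_coshSqrt {x : ℝ} (hx : 0 ≤ x) : 1 + x / 2 ≤ coshSqrt x := by
  simpa [sum_range_succ] using
    sum_le_hasSum (range 2) (fun n _ => by positivity) (hasSum_coshSqrt x)

lemma neg_one_le_coshSqrt (x : ℝ) : -1 ≤ coshSqrt x := by
  rcases le_total x 0 with hx | hx
  · exact (abs_le.1 (abs_coshSqrt_le_one hx)).1
  · linarith [one_add_half_le_coshSqrt hx]

lemma coshSqrt_le_exp_sqrt (x : ℝ) : coshSqrt x ≤ Real.exp √x := by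
  rcases le_total x 0 with hx | hx
  · rw [Real.sqrt_eq_zero_of_nonpos hx, Real.exp_zero]
    exact (abs_le.1 (abs_coshSqrt_le_one hx)).2
  · have : Real.exp (-√x) ≤ Real.exp √x := Real.exp_le_exp.2 (by linarith [Real.sqrt_nonneg x])
    rw [coshSqrt, if_pos hx, Real.cosh_eq]
    linarith

lemma sum_mul_coshSqrt_nonneg (hA : A.PosSemidef) (hB : B.PosSemidef) :
    0 ≤ ∑ z : ι × ι, A z.1 z.2 * coshSqrt (B z.1 z.2) := by
  have hsum : HasSum (fun n : ℕ => ∑ z : ι × ι, A z.1 z.2 * (B z.1 z.2 ^ n / (2 * n).factorial))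
      (∑ z : ι × ι, A z.1 z.2 * coshSqrt (B z.1 z.2)) :=
    hasSum_sum fun z _ => (hasSum_coshSqrt _).mul_left _
  refine hsum.nonneg fun n => ?_
  have h := sum_entries_nonneg_of_posSemidef (hA.hadamard (posSemidef_map_pow hB n))
  simp only [hadamard_apply, map_apply] at h
  simpa only [← mul_div_assoc, ← sum_div] using div_nonneg h (Nat.cast_nonneg _)

/-- The test function of the geometric lemma: it is very negative as soon as one argument is, and
its sum over the entries of two positive semidefinite matrices is nonnegative. -/
noncomputable def crossKernel (x y : ℝ) : ℝ := x * (2 + coshSqrt y) + y * (2 + coshSqrt x)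

lemma crossKernel_comm (x y : ℝ) : crossKernel x y = crossKernel y x := by
  unfold crossKernel
  ring

lemma crossKernel_le_neg_six {x : ℝ} (y : ℝ) (hx : x < -6) : crossKernel x y ≤ -6 := by
  unfold crossKernel
  obtain ⟨hx₁, hx₂⟩ := abs_le.1 (abs_coshSqrt_le_one (x := x) (by linarith))
  rcases le_total y 0 with hy | hy
  · nlinarith [neg_one_le_coshSqrt y]
  · nlinarith [one_add_half_le_coshSqrt hy]

lemma mul_two_add_coshSqrt_le {x y a : ℝ} (hx : x ≤ a) (hy : y ≤ a) (ha : 0 ≤ a) :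
    x * (2 + coshSqrt y) ≤ 3 * a * Real.exp √a := by
  have hexp : coshSqrt y ≤ Real.exp √a := (coshSqrt_le_exp_sqrt y).trans (by gcongr)
  have hone : 1 ≤ Real.exp √a := Real.one_le_exp (Real.sqrt_nonneg a)
  calc x * (2 + coshSqrt y) ≤ a * (2 + coshSqrt y) := by
        gcongr
        linarith [neg_one_le_coshSqrt y]
    _ ≤ a * (3 * Real.exp √a) := by
        gcongr
        linarith
    _ = 3 * a * Real.exp √a := by ring

lemma crossKernel_le {x y a : ℝ} (hx : x ≤ a) (hy : y ≤ a) (ha : 0 ≤ a) :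
    crossKernel x y ≤ 6 * a * Real.exp √a := by
  unfold crossKernel
  linarith [mul_two_add_coshSqrt_le hx hy ha, mul_two_add_coshSqrt_le hy hx ha]

lemma sum_crossKernel_nonneg (hA : A.PosSemidef) (hB : B.PosSemidef) :
    0 ≤ ∑ z : ι × ι, crossKernel (A z.1 z.2) (B z.1 z.2) := by
  have h : ∑ z : ι × ι, crossKernel (A z.1 z.2) (B z.1 z.2) =
      2 * ∑ z : ι × ι, A z.1 z.2 + 2 * ∑ z : ι × ι, B z.1 z.2 +
        (∑ z : ι × ι, A z.1 z.2 * coshSqrt (B z.1 z.2) +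
          ∑ z : ι × ι, B z.1 z.2 * coshSqrt (A z.1 z.2)) := by
    simp only [mul_sum, ← sum_add_distrib, crossKernel]
    exact sum_congr rfl fun z _ => by ring
  have hA' := sum_entries_nonneg_of_posSemidef hA
  have hB' := sum_entries_nonneg_of_posSemidef hB
  have hAB := sum_mul_coshSqrt_nonneg hA hB
  have hBA := sum_mul_coshSqrt_nonneg hB hA
  rw [h]
  positivity

lemma sum_range_inv_succ_sq_le_two (N : ℕ) : ∑ n ∈ range N, (((n : ℝ) + 1) ^ 2)⁻¹ ≤ 2 := by
  calc ∑ n ∈ range N, (((n : ℝ) + 1) ^ 2)⁻¹ = ∑ n ∈ Ioo 0 (N + 1), ((n : ℝ) ^ 2)⁻¹ := by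
        rw [range_eq_Ico, ← Ico_succ_left_eq_Ioo]
        simpa using sum_Ico_add' (fun n : ℕ => ((n : ℝ) ^ 2)⁻¹) 0 N 1
    _ ≤ 2 := by simpa using sum_Ioo_inv_sq_le (α := ℝ) 0 (N + 1)

/-- Pigeonhole with the summable weights `1 / (2 (n + 1)²)`. -/
lemma exists_level_of_le_sum {α : Type*} (s : Finset α) (lev : α → ℕ) (G : ℕ → ℝ) {a : ℝ}
    (ha : 0 ≤ a) (h : a ≤ ∑ z ∈ s, G (lev z)) :
    ∃ n : ℕ, a / (2 * ((n : ℝ) + 1) ^ 2) ≤ #{z ∈ s | lev z = n} * G n := by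
  by_contra! hlt
  set N := s.sup lev + 1
  have hfiber : ∑ n ∈ range N, #{z ∈ s | lev z = n} * G n = ∑ z ∈ s, G (lev z) := by
    rw [← sum_fiberwise_of_maps_to (t := range N) (g := lev)
      fun z hz => mem_range.2 (Nat.lt_succ_of_le (le_sup hz))]
    refine sum_congr rfl fun n _ => ?_
    rw [← nsmul_eq_mul, ← sum_const]
    exact sum_congr rfl fun z hz => by rw [(mem_filter.1 hz).2]
  have hsum : ∑ n ∈ range N, a / (2 * ((n : ℝ) + 1) ^ 2) ≤ a := by
    calc ∑ n ∈ range N, a / (2 * ((n : ℝ) + 1) ^ 2)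
        = a / 2 * ∑ n ∈ range N, (((n : ℝ) + 1) ^ 2)⁻¹ := by
          rw [mul_sum]
          exact sum_congr rfl fun n _ => by rw [div_mul_eq_div_div, div_eq_mul_inv]
      _ ≤ a / 2 * 2 := by gcongr; exact sum_range_inv_succ_sq_le_two N
      _ = a := by ring
  have hstrict : ∑ n ∈ range N, #{z ∈ s | lev z = n} * G n <
      ∑ n ∈ range N, a / (2 * ((n : ℝ) + 1) ^ 2) :=
    sum_lt_sum_of_nonempty ⟨0, mem_range.2 (Nat.succ_pos _)⟩ fun n _ => hlt n
  linarith

lemma succ_cast_cube_le_exp (n : ℕ) : ((n : ℝ) + 1) ^ 3 ≤ Real.exp (6 * √n) := by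
  have hn : (n : ℝ) + 1 ≤ Real.exp √n ^ 2 :=
    calc (n : ℝ) + 1 ≤ (√n + 1) ^ 2 := by
          nlinarith [Real.sq_sqrt (Nat.cast_nonneg (α := ℝ) n), Real.sqrt_nonneg (n : ℝ)]
      _ ≤ Real.exp √n ^ 2 := by gcongr; exact Real.add_one_le_exp _
  calc ((n : ℝ) + 1) ^ 3 ≤ (Real.exp √n ^ 2) ^ 3 := by gcongr
    _ = Real.exp (6 * √n) := by rw [← pow_mul, ← Real.exp_nat_mul]; norm_num

variable {K : Fin 2 → Matrix ι ι ℝ}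

lemma sq_card_le_sum_crossKernel_add_six (hK : ∀ i, (K i).PosSemidef) :
    6 * (Fintype.card ι : ℝ) ^ 2 ≤ ∑ z : ι × ι with ∀ j, -1 ≤ K j z.1 z.2,
      (crossKernel (6 * K 0 z.1 z.2) (6 * K 1 z.1 z.2) + 6) := by
  have hsix : (0 : ℝ) ≤ 6 := by norm_num
  have hnonneg : 0 ≤ ∑ z : ι × ι, crossKernel (6 * K 0 z.1 z.2) (6 * K 1 z.1 z.2) :=
    sum_crossKernel_nonneg ((hK 0).smul hsix) ((hK 1).smul hsix)
  have hbad : ∑ z : ι × ι with ¬ ∀ j, -1 ≤ K j z.1 z.2,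
      (crossKernel (6 * K 0 z.1 z.2) (6 * K 1 z.1 z.2) + 6) ≤ 0 := by
    refine sum_nonpos fun z hz => ?_
    have hentry : K 0 z.1 z.2 < -1 ∨ K 1 z.1 z.2 < -1 := by
      simpa only [not_forall, not_le, Fin.exists_fin_two] using (mem_filter.1 hz).2
    rcases hentry with h | h
    · linarith [crossKernel_le_neg_six (6 * K 1 z.1 z.2)
        (show 6 * K 0 z.1 z.2 < -6 by linarith)]
    · rw [crossKernel_comm]
      linarith [crossKernel_le_neg_six (6 * K 0 z.1 z.2)
        (show 6 * K 1 z.1 z.2 < -6 by linarith)]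
  have htotal : ∑ z : ι × ι, (crossKernel (6 * K 0 z.1 z.2) (6 * K 1 z.1 z.2) + 6) =
      ∑ z : ι × ι, crossKernel (6 * K 0 z.1 z.2) (6 * K 1 z.1 z.2)
        + 6 * (Fintype.card ι : ℝ) ^ 2 := by
    rw [sum_add_distrib, sum_const, card_univ, Fintype.card_prod, nsmul_eq_mul, Nat.cast_mul]
    ring
  rw [← sum_filter_add_sum_filter_not univ fun z : ι × ι => ∀ j, -1 ≤ K j z.1 z.2] at htotal
  linarith

lemma crossKernel_add_six_le {x : Fin 2 → ℝ} {n : ℕ} (hx : ∀ j, x j ≤ n) :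
    crossKernel (6 * x 0) (6 * x 1) + 6 ≤ 42 * ((n : ℝ) + 1) * Real.exp (3 * √n) := by
  have hsqrt : √(6 * n) ≤ 3 * √n := by
    rw [show (3 : ℝ) * √n = √(3 ^ 2 * n) by rw [Real.sqrt_mul (by positivity)]; simp]
    gcongr
    norm_num
  have hone : 1 ≤ Real.exp (3 * √n) := Real.one_le_exp (by positivity)
  have hle := crossKernel_le (a := 6 * n) (mul_le_mul_of_nonneg_left (hx 0) (by norm_num))
    (mul_le_mul_of_nonneg_left (hx 1) (by norm_num)) (by positivity)
  have hexp : 6 * (6 * (n : ℝ)) * Real.exp √(6 * n) ≤ 6 * (6 * n) * Real.exp (3 * √n) := by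
    gcongr
  nlinarith [Nat.cast_nonneg (α := ℝ) n]

lemma exp_neg_mul_le_of_level_le {n : ℕ} {a N : ℝ} (hN : 0 ≤ N)
    (h : 6 * a / (2 * ((n : ℝ) + 1) ^ 2) ≤ N * (42 * ((n : ℝ) + 1) * Real.exp (3 * √n))) :
    1 / 14 * Real.exp (-(9 * √n)) * a ≤ N := by
  rw [div_le_iff₀ (by positivity)] at h
  have ha : a ≤ 14 * (N * Real.exp (9 * √n)) := by
    calc a ≤ 14 * (N * (((n : ℝ) + 1) ^ 3 * Real.exp (3 * √n))) := by linarith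
      _ ≤ 14 * (N * (Real.exp (6 * √n) * Real.exp (3 * √n))) := by
          gcongr
          exact succ_cast_cube_le_exp n
      _ = 14 * (N * Real.exp (9 * √n)) := by rw [← Real.exp_add]; ring_nf
  calc 1 / 14 * Real.exp (-(9 * √n)) * a = a / 14 / Real.exp (9 * √n) := by
        rw [Real.exp_neg]; ring
    _ ≤ N := by
        rw [div_le_iff₀ (Real.exp_pos _)]
        linarith

lemma exists_level (hK : ∀ i, (K i).PosSemidef) :
    ∃ n : ℕ, 1 / 14 * Real.exp (-(9 * √n)) * (Fintype.card ι : ℝ) ^ 2 ≤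
      #{z : ι × ι | (n : ℝ) - 1 ≤ max (K 0 z.1 z.2) (K 1 z.1 z.2) ∧ ∀ j, -1 ≤ K j z.1 z.2} := by
  set good : Finset (ι × ι) := {z | ∀ j, -1 ≤ K j z.1 z.2}
  set lev : ι × ι → ℕ := fun z => ⌊max (K 0 z.1 z.2) (K 1 z.1 z.2) + 1⌋₊
  have hle : 6 * (Fintype.card ι : ℝ) ^ 2 ≤
      ∑ z ∈ good, 42 * ((lev z : ℝ) + 1) * Real.exp (3 * √(lev z)) := by
    refine (sq_card_le_sum_crossKernel_add_six hK).trans (sum_le_sum fun z _ => ?_)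
    have hmax : max (K 0 z.1 z.2) (K 1 z.1 z.2) + 1 < lev z + 1 := Nat.lt_floor_add_one _
    refine crossKernel_add_six_le (x := fun j => K j z.1 z.2) (Fin.forall_fin_two.2 ⟨?_, ?_⟩)
    · linarith [le_max_left (K 0 z.1 z.2) (K 1 z.1 z.2)]
    · linarith [le_max_right (K 0 z.1 z.2) (K 1 z.1 z.2)]
  obtain ⟨n, hn⟩ := exists_level_of_le_sum good lev
    (fun n => 42 * ((n : ℝ) + 1) * Real.exp (3 * √n)) (by positivity) hle
  refine ⟨n, (exp_neg_mul_le_of_level_le (Nat.cast_nonneg _) hn).trans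
    (Nat.cast_le.2 (card_le_card fun z hz => ?_))⟩
  obtain ⟨hgood, hlev⟩ : (∀ j, -1 ≤ K j z.1 z.2) ∧ lev z = n := by
    simpa only [good, mem_filter, mem_univ, true_and] using hz
  have hfloor : (n : ℝ) ≤ max (K 0 z.1 z.2) (K 1 z.1 z.2) + 1 := by
    rw [← hlev]
    exact Nat.floor_le (by linarith [hgood 0, le_max_left (K 0 z.1 z.2) (K 1 z.1 z.2)])
  exact mem_filter.2 ⟨mem_univ _, by linarith, hgood⟩

lemma exists_level_and_color (hK : ∀ i, (K i).PosSemidef) :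
    ∃ (n : ℕ) (i : Fin 2), 1 / 28 * Real.exp (-(9 * √n)) * (Fintype.card ι : ℝ) ^ 2 ≤
      #{z : ι × ι | (n : ℝ) - 1 ≤ K i z.1 z.2 ∧ ∀ j, -1 ≤ K j z.1 z.2} := by
  classical
  obtain ⟨n, hn⟩ := exists_level hK
  set cell : Fin 2 → Finset (ι × ι) :=
    fun i => {z | (n : ℝ) - 1 ≤ K i z.1 z.2 ∧ ∀ j, -1 ≤ K j z.1 z.2}
  simp only [le_max_iff, or_and_right, filter_or] at hn
  have hcard : 1 / 14 * Real.exp (-(9 * √n)) * (Fintype.card ι : ℝ) ^ 2 ≤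
      (#(cell 0) : ℝ) + #(cell 1) :=
    hn.trans (by rw [← Nat.cast_add]; exact Nat.cast_le.2 (card_union_le _ _))
  by_contra! hlt
  linarith [hlt n 0, hlt n 1]

lemma exists_level_and_color_and_center [Nonempty ι] (hK : ∀ i, (K i).PosSemidef) :
    ∃ (n : ℕ) (i : Fin 2) (x : ι), 1 / 28 * Real.exp (-(9 * √n)) * (Fintype.card ι : ℝ) ≤
      #{y | (n : ℝ) - 1 ≤ K i x y ∧ ∀ j, -1 ≤ K j x y} := by
  obtain ⟨n, i, hni⟩ := exists_level_and_color hK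
  refine ⟨n, i, ?_⟩
  by_contra! hlt
  have hsum := sum_lt_sum_of_nonempty univ_nonempty fun x (_ : x ∈ univ) => hlt x
  have hfiber : #{z : ι × ι | (n : ℝ) - 1 ≤ K i z.1 z.2 ∧ ∀ j, -1 ≤ K j z.1 z.2} =
      ∑ x, #{y | (n : ℝ) - 1 ≤ K i x y ∧ ∀ j, -1 ≤ K j x y} := by
    simp only [card_filter, Fintype.sum_prod_type]
  rw [hfiber, Nat.cast_sum] at hni
  rw [sum_const, card_univ, nsmul_eq_mul] at hsum
  linarith

end Geometric

/-! ### Neighbourhoods with large common parts -/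

section Neighborhoods

variable {V ι : Type*}

open Classical in
/-- The neighbours of `x` inside the finite set `S`. -/
noncomputable def neighborsIn (G : SimpleGraph V) (x : V) (S : Finset V) : Finset V :=
  {y ∈ S | G.Adj x y}

lemma mem_neighborsIn {G : SimpleGraph V} {x y : V} {S : Finset V} :
    y ∈ neighborsIn G x S ↔ y ∈ S ∧ G.Adj x y := by
  classical exact mem_filter

lemma neighborsIn_subset (G : SimpleGraph V) (x : V) (S : Finset V) : neighborsIn G x S ⊆ S :=
  fun _ hy => (mem_neighborsIn.1 hy).1

lemma neighborsIn_mono (G : SimpleGraph V) (x : V) {S T : Finset V} (h : S ⊆ T) :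
    neighborsIn G x S ⊆ neighborsIn G x T :=
  fun _ hy => mem_neighborsIn.2 ⟨h (mem_neighborsIn.1 hy).1, (mem_neighborsIn.1 hy).2⟩

lemma le_one_of_mul_card_le_card_neighborsIn {G : SimpleGraph V} {r : ℝ} {x : V} {S : Finset V}
    (hS : S.Nonempty) (h : r * #S ≤ #(neighborsIn G x S)) : r ≤ 1 := by
  refine le_of_mul_le_mul_right (h.trans ?_) (Nat.cast_pos.2 hS.card_pos)
  rw [one_mul]
  exact_mod_cast card_le_card (neighborsIn_subset G x S)

section CodegreeKernel

variable [DecidableEq V]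

/-- The Gram matrix of the centred indicator vectors of a family of `m`-subsets of `Y`, normalised
so that its `(x, y)` entry is the `l` with `#(N x ∩ N y) = (m / #Y + l * α) * m`. -/
noncomputable def codegreeKernel (Y : Finset V) (N : ι → Finset V) (m : ℕ) (α : ℝ) :
    Matrix ι ι ℝ :=
  Matrix.of fun x y => (α * m)⁻¹ * (#(N x ∩ N y) - m / #Y * m)

variable {Y : Finset V} {N : ι → Finset V} {m : ℕ}

lemma sum_centered_indicator_mul (hsub : ∀ x, N x ⊆ Y) (hcard : ∀ x, #(N x) = m) (x y : ι) :
    ∑ v ∈ Y, ((if v ∈ N x then (1 : ℝ) else 0) - m / #Y) * ((if v ∈ N y then 1 else 0) - m / #Y)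
      = #(N x ∩ N y) - m / #Y * m := by
  have hone (x : ι) : ∑ v ∈ Y, (if v ∈ N x then (1 : ℝ) else 0) = m := by
    rw [sum_boole, filter_mem_eq_inter, inter_eq_right.2 (hsub x), hcard]
  have htwo : ∑ v ∈ Y, (if v ∈ N x then (1 : ℝ) else 0) * (if v ∈ N y then 1 else 0)
      = #(N x ∩ N y) := by
    simp_rw [ite_zero_mul_ite_zero, mul_one, ← mem_inter]
    rw [sum_boole, filter_mem_eq_inter, inter_eq_right.2 (inter_subset_left.trans (hsub x))]
  have hsq : (#Y : ℝ) * ((m : ℝ) / #Y) * (m / #Y) = m / #Y * m := by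
    rcases eq_or_ne (#Y : ℝ) 0 with h | h
    · simp [h]
    · field_simp
  simp_rw [sub_mul, mul_sub, sum_sub_distrib, ← mul_sum, ← sum_mul]
  rw [hone, hone, htwo, sum_const, nsmul_eq_mul]
  linear_combination hsq

lemma posSemidef_codegreeKernel [Finite ι] {α : ℝ} (hα : 0 ≤ α) (hsub : ∀ x, N x ⊆ Y)
    (hcard : ∀ x, #(N x) = m) : (codegreeKernel Y N m α).PosSemidef := by
  set C : Matrix Y ι ℝ := Matrix.of fun v x => (if (v : V) ∈ N x then (1 : ℝ) else 0) - m / #Y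
  have hgram : codegreeKernel Y N m α = (α * m)⁻¹ • (Cᴴ * C) := by
    ext x y
    simp only [codegreeKernel, Matrix.smul_apply, Matrix.mul_apply, Matrix.conjTranspose_apply, C,
      Matrix.of_apply, star_trivial, smul_eq_mul, ← sum_centered_indicator_mul hsub hcard x y]
    rw [← sum_coe_sort]
  cases nonempty_fintype ι
  rw [hgram]
  exact (Matrix.posSemidef_conjTranspose_mul_self C).smul (by positivity)

lemma le_card_inter_of_le_codegreeKernel {α l : ℝ} (hα : 0 < α) (hm : 0 < m) {x y : ι}
    (hl : l ≤ codegreeKernel Y N m α x y) : (m / #Y + l * α) * m ≤ #(N x ∩ N y) := by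
  have hm' : (0 : ℝ) < m := Nat.cast_pos.2 hm
  rw [codegreeKernel, Matrix.of_apply, ← div_eq_inv_mul, le_div_iff₀ (by positivity)] at hl
  linarith

end CodegreeKernel

variable {G : Fin 2 → SimpleGraph V} {X : Finset V} {Y : Fin 2 → Finset V} {p α : Fin 2 → ℝ}

lemma exists_regular_subset_neighborsIn {i : Fin 2}
    (hdeg : ∀ x ∈ X, p i * #(Y i) ≤ #(neighborsIn (G i) x (Y i))) (x : X) :
    ∃ N ⊆ neighborsIn (G i) x (Y i), #N = ⌈p i * #(Y i)⌉₊ :=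
  exists_subset_card_eq (Nat.ceil_le.2 (hdeg x x.2))

lemma exists_common_neighborsIn (hX : X.Nonempty) (hY : ∀ i, (Y i).Nonempty) (hp : ∀ i, 0 < p i)
    (hα : ∀ i, 0 < α i) (hdeg : ∀ i, ∀ x ∈ X, p i * #(Y i) ≤ #(neighborsIn (G i) x (Y i))) :
    ∃ x ∈ X, ∃ (l : Fin 2) (n : ℕ) (Y' : Fin 2 → Finset V), ∃ X' ⊆ X,
      (∀ i, Y' i ⊆ neighborsIn (G i) x (Y i)) ∧ (∀ i, p i * #(Y i) ≤ #(Y' i)) ∧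
      1 / 28 * Real.exp (-(9 * √n)) * #X ≤ #X' ∧
      (∀ i, ∀ y ∈ X', (p i - α i) * #(Y' i) ≤ #(neighborsIn (G i) y (Y' i))) ∧
      ∀ y ∈ X', (p l + (n - 1) * α l) * #(Y' l) ≤ #(neighborsIn (G l) y (Y' l)) := by
  classical
  choose N hN hNcard using fun i => exists_regular_subset_neighborsIn (hdeg i)
  have hpY (i) : 0 < p i * #(Y i) := mul_pos (hp i) (Nat.cast_pos.2 (hY i).card_pos)
  have hdensity (i) : p i ≤ ⌈p i * #(Y i)⌉₊ / #(Y i) := by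
    rw [le_div_iff₀ (Nat.cast_pos.2 (hY i).card_pos)]
    exact Nat.le_ceil _
  set K : Fin 2 → Matrix X X ℝ := fun i => codegreeKernel (Y i) (N i) ⌈p i * #(Y i)⌉₊ (α i)
  have hK (i) : (K i).PosSemidef := posSemidef_codegreeKernel (hα i).le
    (fun x => (hN i x).trans (neighborsIn_subset _ _ _)) (hNcard i)
  have := hX.to_subtype
  obtain ⟨n, l, x, hx⟩ := exists_level_and_color_and_center hK
  have hcodegree {i : Fin 2} {y : X} {a : ℝ} (h : a ≤ K i x y) :
      (p i + a * α i) * #(N i x) ≤ #(neighborsIn (G i) y (N i x)) := by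
    refine le_trans ?_ ((le_card_inter_of_le_codegreeKernel (hα i) (Nat.ceil_pos.2 (hpY i)) h).trans
      (Nat.cast_le.2 (card_le_card fun z hz => ?_)))
    · rw [hNcard]
      gcongr
      exact hdensity i
    · obtain ⟨hzx, hzy⟩ := mem_inter.1 hz
      exact mem_neighborsIn.2 ⟨hzx, (mem_neighborsIn.1 (hN i y hzy)).2⟩
  refine ⟨x, x.2, l, n, fun i => N i x,
    ({y | (n : ℝ) - 1 ≤ K l x y ∧ ∀ j, -1 ≤ K j x y} : Finset X).map (Function.Embedding.subtype _),
    map_subtype_subset _, fun i => hN i x, fun i => ?_, ?_, ?_, ?_⟩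
  · rw [hNcard]
    exact Nat.le_ceil _
  · simpa using hx
  · intro i y hy
    obtain ⟨z, hz, rfl⟩ := mem_map.1 hy
    have h := hcodegree ((mem_filter.1 hz).2.2 i)
    rwa [neg_one_mul, ← sub_eq_add_neg] at h
  · intro y hy
    obtain ⟨z, hz, rfl⟩ := mem_map.1 hy
    exact hcodegree (mem_filter.1 hz).2.1

end Neighborhoods

/-! ### Colourings, monochromatic cliques and books -/

section Colorings

variable {V κ : Type*} {G G' : κ → SimpleGraph V} {k k' : κ → ℕ} {A : κ → Finset V}
  {S S' X X' : Finset V} {x : V} {j : κ}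

/-- An edge colouring of the complete graph on `S` is represented by its colour classes `G i`.
These are only required to cover all pairs, so a pair may carry several colours. -/
def IsColoring (G : κ → SimpleGraph V) (S : Finset V) : Prop :=
  (S : Set V).Pairwise fun u v => ∃ i, (G i).Adj u v

/-- `S` contains a clique with at least `k i` vertices in some colour `i`; the Ramsey property for
the tuple of clique sizes `k`. -/
def HasMonoClique (G : κ → SimpleGraph V) (k : κ → ℕ) (S : Finset V) : Prop :=
  ∃ i, ∃ A ⊆ S, (G i).IsClique (A : Set V) ∧ k i ≤ #A

/-- A book in every colour at once: each spine `A i` is a clique of `G i` joined completely in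
`G i` to the set `X` of pages, which is common to all colours. -/
structure IsMultiBook (G : κ → SimpleGraph V) (A : κ → Finset V) (X : Finset V) : Prop where
  isClique : ∀ i, (G i).IsClique (A i : Set V)
  isCompleteBetween : ∀ i, (G i).IsCompleteBetween (A i) X

lemma IsColoring.mono (hG : IsColoring G S) (h : S' ⊆ S) : IsColoring G S' :=
  Set.Pairwise.mono (coe_subset.2 h) hG

lemma card_le_sum_neighborsIn_add_one [Fintype κ] (h : ∀ y ∈ X, y ≠ x → ∃ i, (G i).Adj x y) :
    #X ≤ ∑ i, #(neighborsIn (G i) x X) + 1 := by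
  classical
  have hcover : X ⊆ insert x (univ.biUnion fun i => neighborsIn (G i) x X) := by
    intro y hy
    rcases eq_or_ne y x with rfl | hyx
    · exact mem_insert_self _ _
    · obtain ⟨i, hi⟩ := h y hy hyx
      exact mem_insert_of_mem (mem_biUnion.2 ⟨i, mem_univ i, mem_neighborsIn.2 ⟨hy, hi⟩⟩)
  calc #X ≤ #(univ.biUnion fun i => neighborsIn (G i) x X) + 1 :=
        (card_le_card hcover).trans (card_insert_le _ _)
    _ ≤ ∑ i, #(neighborsIn (G i) x X) + 1 := Nat.add_le_add_right card_biUnion_le 1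

lemma IsColoring.card_le_sum_neighborsIn_add_one [Fintype κ] (hG : IsColoring G S) (hx : x ∈ S)
    (hX : X ⊆ S) : #X ≤ ∑ i, #(neighborsIn (G i) x X) + 1 :=
  _root_.card_le_sum_neighborsIn_add_one fun _ hy hyx => hG hx (hX hy) hyx.symm

lemma isCompleteBetween_insert {H : SimpleGraph V} {A Y Y' : Set V} (h : H.IsCompleteBetween A Y)
    (hY' : Y' ⊆ Y) (hx : ∀ y ∈ Y', H.Adj x y) : H.IsCompleteBetween (insert x A) Y' := by
  rintro a (rfl | ha) y hy
  · exact hx y hy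
  · exact h ha (hY' hy)

lemma isMultiBook_empty (G : κ → SimpleGraph V) (X : Finset V) : IsMultiBook G (fun _ => ∅) X where
  isClique _ := by simp
  isCompleteBetween _ := by simp [SimpleGraph.IsCompleteBetween]

lemma IsMultiBook.mono (h : IsMultiBook G A X) (hX : X' ⊆ X) : IsMultiBook G A X' where
  isClique := h.isClique
  isCompleteBetween i _ ha _ hx := h.isCompleteBetween i ha (hX hx)

lemma IsMultiBook.mono_graph (h : IsMultiBook G A X) (hG : ∀ i, G i ≤ G' i) :
    IsMultiBook G' A X where
  isClique i := (h.isClique i).mono (hG i)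
  isCompleteBetween i _ ha _ hx := hG i (h.isCompleteBetween i ha hx)

lemma IsMultiBook.notMem_spine (h : IsMultiBook G A X) (hx : x ∈ X) (i : κ) : x ∉ A i :=
  fun hxA => (h.isCompleteBetween i hxA hx).ne rfl

lemma IsMultiBook.insert [DecidableEq V] [DecidableEq κ] (h : IsMultiBook G A X) (hx : x ∈ X)
    (hX : X' ⊆ neighborsIn (G j) x X) :
    IsMultiBook G (Function.update A j (insert x (A j))) X' where
  isClique i := by
    rcases eq_or_ne i j with rfl | hij
    · rw [Function.update_self, coe_insert, SimpleGraph.isClique_insert]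
      exact ⟨h.isClique i, fun a ha _ => (h.isCompleteBetween i ha hx).symm⟩
    · rw [Function.update_of_ne hij]
      exact h.isClique i
  isCompleteBetween i := by
    have hX' : (X' : Set V) ⊆ X := coe_subset.2 (hX.trans (neighborsIn_subset _ _ _))
    rcases eq_or_ne i j with rfl | hij
    · rw [Function.update_self, coe_insert]
      exact isCompleteBetween_insert (h.isCompleteBetween i) hX'
        fun y hy => (mem_neighborsIn.1 (hX hy)).2
    · rw [Function.update_of_ne hij]
      exact fun a ha y hy => h.isCompleteBetween i ha (hX' hy)

lemma HasMonoClique.of_isMultiBook (h : IsMultiBook G A X) (hX : HasMonoClique G k' X)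
    (hAS : ∀ i, A i ⊆ S) (hXS : X ⊆ S) (hk : ∀ i, k i ≤ #(A i) + k' i) : HasMonoClique G k S := by
  classical
  obtain ⟨i, B, hBX, hB, hcard⟩ := hX
  have hjoin : (G i).IsCompleteBetween (A i) B :=
    fun _ ha _ hb => h.isCompleteBetween i ha (hBX hb)
  refine ⟨i, A i ∪ B, union_subset (hAS i) (hBX.trans hXS), ?_, ?_⟩
  · rw [coe_union, SimpleGraph.IsClique, Set.pairwise_union]
    exact ⟨h.isClique i, hB, fun a ha b hb _ => ⟨hjoin ha hb, (hjoin ha hb).symm⟩⟩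
  · rw [card_union_of_disjoint (disjoint_coe.1 hjoin.disjoint)]
    exact (hk i).trans (Nat.add_le_add_left hcard _)

lemma sum_sub_single_add [Fintype κ] [DecidableEq κ] {a : ℕ} (h : a ≤ k j) :
    ∑ i, (k - Pi.single j a : κ → ℕ) i + a = ∑ i, k i := by
  have hle : Pi.single j a ≤ k := by
    intro i
    rcases eq_or_ne i j with rfl | hij
    · rwa [Pi.single_eq_same]
    · simp [Pi.single_eq_of_ne hij]
  calc ∑ i, (k - Pi.single j a : κ → ℕ) i + a
      = ∑ i, ((k - Pi.single j a : κ → ℕ) i + Pi.single (M := fun _ => ℕ) j a i) := by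
        rw [sum_add_distrib, Fintype.sum_pi_single']
    _ = ∑ i, k i := sum_congr rfl fun i _ => tsub_add_cancel_of_le (hle i)

lemma HasMonoClique.of_eq_zero {i : κ} (hk : k i = 0) : HasMonoClique G k S :=
  ⟨i, ∅, empty_subset S, by simp, by simp [hk]⟩

lemma HasMonoClique.of_isCompleteBetween [DecidableEq κ] {A Y : Finset V} (hA : A ⊆ S) (hY : Y ⊆ S)
    (hclique : (G j).IsClique (A : Set V)) (hAY : (G j).IsCompleteBetween A Y)
    (h : HasMonoClique G (k - Pi.single j #A) Y) : HasMonoClique G k S := by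
  have hbook : IsMultiBook G (Function.update (fun _ => ∅) j A) Y :=
    { isClique := (Function.forall_update_iff _ fun i (B : Finset V) =>
        (G i).IsClique (B : Set V)).2 ⟨hclique, fun i _ => by simp⟩
      isCompleteBetween := (Function.forall_update_iff _ fun i (B : Finset V) =>
        (G i).IsCompleteBetween B Y).2 ⟨hAY, fun i _ => by simp [SimpleGraph.IsCompleteBetween]⟩ }
  refine of_isMultiBook hbook h ?_ hY fun i => ?_
  · exact (Function.forall_update_iff _ fun _ B => B ⊆ S).2 ⟨hA, fun i _ => empty_subset S⟩
  · rw [Pi.sub_apply, ← tsub_le_iff_left]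
    refine tsub_le_tsub_left ?_ _
    rcases eq_or_ne i j with rfl | hij
    · rw [Function.update_self, Pi.single_eq_same]
    · rw [Pi.single_eq_of_ne hij]
      exact Nat.zero_le _

lemma HasMonoClique.of_neighborsIn [DecidableEq κ] (hx : x ∈ S)
    (h : HasMonoClique G (k - Pi.single j 1) (neighborsIn (G j) x S)) : HasMonoClique G k S := by
  refine of_isCompleteBetween (A := {x}) (j := j) (singleton_subset_iff.2 hx)
    (neighborsIn_subset _ _ _) (by simp) (fun a ha y hy => ?_) (by rwa [card_singleton])
  rw [coe_singleton, Set.mem_singleton_iff] at ha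
  exact ha ▸ (mem_neighborsIn.1 hy).2

end Colorings

/-! ### The multicolour book algorithm -/

/-- Parameters of the book algorithm: it builds spines of size `T` in a colouring in which all
degrees have density at least `p`, losing at most `δ` of this density; `w` separates the steps that
extend a spine from those that boost a density. -/
structure BookParams where
  T : ℕ
  p : ℝ
  δ : ℝ
  w : ℝ
  δ_pos : 0 < δ
  δ_lt_p : δ < p
  δ_le_one : δ ≤ 1
  one_le_w : 1 ≤ w
  four_mul_w_sq_le : 4 * w ^ 2 ≤ T * δ

namespace BookParams

variable (P : BookParams)

/-- The number of vertices with which the book algorithm can run to its end. -/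
noncomputable def size : ℝ :=
  Real.exp (46 * P.w * (P.T + 1) + 88 * P.T * Real.log (4 / P.δ) / P.w)

/-- How far the density exceeds `p - δ` after `a` extensions of a spine, each of which costs a
factor `1 - 1 / T`, and boosts by a total factor `exp l`. -/
noncomputable def excess (a : ℕ) (l : ℝ) : ℝ :=
  P.δ * (1 - 1 / P.T) ^ a * Real.exp l

lemma nonempty_of_size_le {V : Type*} {S : Finset V} (hS : P.size ≤ #S) : S.Nonempty :=
  card_pos.1 (Nat.cast_pos.1 ((Real.exp_pos _).trans_le hS))

lemma w_pos : 0 < P.w := zero_lt_one.trans_le P.one_le_w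

lemma four_le_T : (4 : ℝ) ≤ P.T := by
  have hw := pow_le_pow_left₀ zero_le_one P.one_le_w 2
  have hδ := mul_le_of_le_one_right (Nat.cast_nonneg P.T) P.δ_le_one
  linarith [P.four_mul_w_sq_le]

lemma T_pos : (0 : ℝ) < P.T := by linarith [P.four_le_T]

lemma w_sq_le_T : P.w ^ 2 ≤ P.T := by
  have hδ := mul_le_of_le_one_right (Nat.cast_nonneg P.T) P.δ_le_one
  nlinarith [P.four_mul_w_sq_le, sq_nonneg P.w]

lemma one_sub_inv_T_nonneg : 0 ≤ 1 - 1 / (P.T : ℝ) := by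
  rw [sub_nonneg, div_le_one P.T_pos]
  linarith [P.four_le_T]

lemma quarter_le_one_sub_inv_pow {a : ℕ} (ha : a ≤ P.T) : 1 / 4 ≤ (1 - 1 / (P.T : ℝ)) ^ a := by
  have hT := P.T_pos
  have hbernoulli := one_add_mul_self_le_rpow_one_add (s := -(1 / (P.T : ℝ))) (p := P.T / 2)
    (by linarith [P.one_sub_inv_T_nonneg]) (by linarith [P.four_le_T])
  have hhalf : 1 / 2 ≤ (1 - 1 / (P.T : ℝ)) ^ ((P.T : ℝ) / 2) := by
    rw [← sub_eq_add_neg] at hbernoulli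
    refine le_of_eq_of_le ?_ hbernoulli
    field_simp
    norm_num
  calc (1 / 4 : ℝ) = (1 / 2) ^ 2 := by norm_num
    _ ≤ ((1 - 1 / (P.T : ℝ)) ^ ((P.T : ℝ) / 2)) ^ 2 := by gcongr
    _ = (1 - 1 / (P.T : ℝ)) ^ P.T := by
        rw [← Real.rpow_natCast, ← Real.rpow_mul P.one_sub_inv_T_nonneg, Nat.cast_ofNat,
          div_mul_cancel₀ _ two_ne_zero, Real.rpow_natCast]
    _ ≤ (1 - 1 / (P.T : ℝ)) ^ a := pow_le_pow_of_le_one P.one_sub_inv_T_nonneg (by simp) ha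

lemma quarter_mul_exp_le_excess {a : ℕ} (ha : a ≤ P.T) (l : ℝ) :
    P.δ / 4 * Real.exp l ≤ P.excess a l := by
  have hδ := P.δ_pos
  calc P.δ / 4 * Real.exp l = P.δ * (1 / 4) * Real.exp l := by ring
    _ ≤ P.excess a l := by
        unfold excess
        gcongr
        exact P.quarter_le_one_sub_inv_pow ha

lemma excess_pos {a : ℕ} (ha : a ≤ P.T) (l : ℝ) : 0 < P.excess a l :=
  (mul_pos (by linarith [P.δ_pos]) (Real.exp_pos l)).trans_le (P.quarter_mul_exp_le_excess ha l)

lemma excess_succ (a : ℕ) (l : ℝ) : P.excess (a + 1) l = P.excess a l - P.excess a l / P.T := by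
  unfold excess
  ring

lemma excess_add_log (a : ℕ) (l : ℝ) {u : ℝ} (hu : 0 < 1 + u / P.T) :
    P.excess a (l + Real.log (1 + u / P.T)) = P.excess a l + u * (P.excess a l / P.T) := by
  unfold excess
  rw [Real.exp_add, Real.exp_log hu]
  ring

lemma div_add_le_log {u : ℝ} (hu : 0 < u) : u / (P.T + u) ≤ Real.log (1 + u / P.T) := by
  have hT := P.T_pos
  calc u / (P.T + u) = 1 - (1 + u / P.T)⁻¹ := by field_simp; ring
    _ ≤ Real.log (1 + u / P.T) := Real.one_sub_inv_le_log_of_pos (by positivity)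

lemma w_sq_div_le_log : P.w ^ 2 / (2 * P.T) ≤ Real.log (1 + P.w ^ 2 / P.T) := by
  have hw := P.w_pos
  have hT := P.T_pos
  refine le_trans ?_ (P.div_add_le_log (by positivity))
  gcongr
  linarith [P.w_sq_le_T]

/-- The price in the reservoir of a boost by `u` is at most a fixed multiple of the gain in
log-density: for `u ≤ T` because the latter is of order `u / T ≥ w √u / T`, beyond that because
`u δ ≤ 4 T` forces `w √u ≤ T`. -/
lemma w_mul_sqrt_le {u : ℝ} (h₁ : P.w ^ 2 < u) (h₂ : u * P.δ ≤ 4 * P.T) :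
    P.w * √u ≤ 2 * (P.T * Real.log (1 + u / P.T)) := by
  have hw := P.w_pos
  have hT := P.T_pos
  have hu : 0 < u := (sq_nonneg P.w).trans_lt h₁
  have hsq : √u ^ 2 = u := Real.sq_sqrt hu.le
  have hwu : P.w ≤ √u := Real.le_sqrt_of_sq_le h₁.le
  have hlog := mul_le_mul_of_nonneg_left (P.div_add_le_log hu) hT.le
  refine le_trans ?_ (mul_le_mul_of_nonneg_left hlog zero_le_two)
  rw [← mul_div_assoc, ← mul_div_assoc, le_div_iff₀ (by positivity)]
  rcases le_total u P.T with huT | huT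
  · have hle : P.w * √u ≤ u := by nlinarith
    nlinarith [mul_nonneg hw.le (Real.sqrt_nonneg u)]
  · have hle : P.w * √u ≤ P.T := by
      refine (sq_le_sq₀ (by positivity) hT.le).1 (le_of_mul_le_mul_right ?_ P.δ_pos)
      calc (P.w * √u) ^ 2 * P.δ = P.w ^ 2 * (u * P.δ) := by rw [mul_pow, hsq]; ring
        _ ≤ P.w ^ 2 * (4 * P.T) := by gcongr
        _ = (4 * P.w ^ 2) * P.T := by ring
        _ ≤ (P.T * P.δ) * P.T := mul_le_mul_of_nonneg_right P.four_mul_w_sq_le hT.le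
        _ = (P.T : ℝ) ^ 2 * P.δ := by ring
    nlinarith [mul_nonneg hw.le (Real.sqrt_nonneg u)]

lemma exp_neg_log_le {n : ℕ} (h₁ : P.w ^ 2 < (n : ℝ) - 1) (h₂ : ((n : ℝ) - 1) * P.δ ≤ 4 * P.T) :
    Real.exp (-(44 / P.w * P.T * Real.log (1 + ((n : ℝ) - 1) / P.T))) ≤
      1 / 28 * Real.exp (-(9 * √n)) := by
  have hw := P.w_pos
  have hn : 1 < (n : ℝ) - 1 := (one_le_pow₀ P.one_le_w).trans_lt h₁
  have hsqrt : √(n : ℝ) ≤ 2 * √((n : ℝ) - 1) := by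
    refine Real.sqrt_le_iff.2 ⟨by positivity, ?_⟩
    rw [mul_pow, Real.sq_sqrt (by linarith)]
    linarith
  have hlog : 22 * √((n : ℝ) - 1) ≤ 44 / P.w * P.T * Real.log (1 + ((n : ℝ) - 1) / P.T) := by
    calc 22 * √((n : ℝ) - 1) = 22 / P.w * (P.w * √((n : ℝ) - 1)) := by field_simp
      _ ≤ 22 / P.w * (2 * (P.T * Real.log (1 + ((n : ℝ) - 1) / P.T))) := by
          gcongr 22 / P.w * ?_
          exact P.w_mul_sqrt_le h₁ h₂
      _ = 44 / P.w * P.T * Real.log (1 + ((n : ℝ) - 1) / P.T) := by ring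
  have hone : 1 ≤ √((n : ℝ) - 1) := Real.one_le_sqrt.2 hn.le
  have hconst : Real.exp (-4) ≤ 1 / 28 := by
    rw [Real.exp_neg, one_div]
    refine inv_anti₀ (by norm_num) ?_
    calc (28 : ℝ) ≤ 2.7 ^ 4 := by norm_num
      _ ≤ Real.exp 1 ^ 4 := by gcongr; linarith [Real.exp_one_gt_d9]
      _ = Real.exp 4 := by rw [← Real.exp_nat_mul]; norm_num
  calc Real.exp (-(44 / P.w * P.T * Real.log (1 + ((n : ℝ) - 1) / P.T)))
      ≤ Real.exp (-4 + -(9 * √n)) := Real.exp_le_exp.2 (by linarith)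
    _ = Real.exp (-4) * Real.exp (-(9 * √n)) := Real.exp_add _ _
    _ ≤ 1 / 28 * Real.exp (-(9 * √n)) := by gcongr

end BookParams

section BookAlgorithm

variable {V : Type*}

lemma sum_update_eq_sum_add {ι M : Type*} [Fintype ι] [DecidableEq ι] [AddCommMonoid M]
    {β : ι → Type*} (F : ∀ i, β i → M) (f : ∀ i, β i) {j : ι} {b : β j} {d : M}
    (h : F j b = F j (f j) + d) : ∑ i, F i (Function.update f j b i) = ∑ i, F i (f i) + d := by
  have hsplit (i) :
      F i (Function.update f j b i) = F i (f i) + Pi.single (M := fun _ => M) j d i := by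
    rcases eq_or_ne i j with rfl | hij
    · rw [Function.update_self, Pi.single_eq_same, h]
    · rw [Function.update_of_ne hij, Pi.single_eq_of_ne hij, add_zero]
  simp only [hsplit, sum_add_distrib, Fintype.sum_pi_single']

/-- The data of the book algorithm in one colour `H`: a book in `S` whose `pages` shrink by a factor
`P.p - P.δ` whenever the `spine` is extended or the density into `pages` is boosted. Here `boosts`
counts the latter and `logGain` is the logarithm of the accumulated gain in density. -/
structure BookSide (P : BookParams) (H : SimpleGraph V) (S : Finset V) where
  spine : Finset V
  pages : Finset V
  boosts : ℕ
  logGain : ℝ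
  spine_subset : spine ⊆ S
  pages_subset : pages ⊆ S
  isCompleteBetween : H.IsCompleteBetween spine pages
  card_spine_le : #spine ≤ P.T
  le_card_pages : (P.p - P.δ) ^ (#spine + boosts) * #S ≤ #pages
  boosts_mul_log_le : boosts * Real.log (1 + P.w ^ 2 / P.T) ≤ logGain

namespace BookSide

variable {P : BookParams} {H : SimpleGraph V} {S Y : Finset V} {x : V} (c : BookSide P H S)

/-- The number of steps of the book algorithm made in this colour. -/
def rank : ℕ := #c.spine + c.boosts

/-- How far the density guaranteed from the reservoir into the pages exceeds `P.p - P.δ`. -/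
noncomputable def excess : ℝ := P.excess #c.spine c.logGain

/-- The logarithm of the factor that the steps made in this colour may cost the reservoir. -/
noncomputable def cost : ℝ := 23 * P.w * #c.spine + 44 / P.w * P.T * c.logGain

/-- The state of a colour at the start of the book algorithm. -/
def initial (P : BookParams) (H : SimpleGraph V) (S : Finset V) : BookSide P H S where
  spine := ∅
  pages := S
  boosts := 0
  logGain := 0
  spine_subset := empty_subset S
  pages_subset := subset_rfl
  isCompleteBetween := by simp [SimpleGraph.IsCompleteBetween]
  card_spine_le := Nat.zero_le P.T
  le_card_pages := by simp
  boosts_mul_log_le := by simp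

lemma pages_nonempty (hS : S.Nonempty) : c.pages.Nonempty := by
  have hp : 0 < P.p - P.δ := sub_pos.2 P.δ_lt_p
  exact card_pos.1 (Nat.cast_pos.1 (lt_of_lt_of_le (by positivity) c.le_card_pages))

lemma excess_pos : 0 < c.excess := P.excess_pos c.card_spine_le _

lemma logGain_nonneg : 0 ≤ c.logGain := by
  have hlog : 0 ≤ Real.log (1 + P.w ^ 2 / P.T) :=
    Real.log_nonneg (le_add_of_nonneg_right (by positivity))
  exact (mul_nonneg (Nat.cast_nonneg _) hlog).trans c.boosts_mul_log_le

lemma logGain_le (hexcess : c.excess ≤ 1) : c.logGain ≤ Real.log (4 / P.δ) := by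
  rw [Real.le_log_iff_exp_le (div_pos four_pos P.δ_pos), le_div_iff₀ P.δ_pos]
  have h := (P.quarter_mul_exp_le_excess c.card_spine_le c.logGain).trans hexcess
  linarith

lemma mul_δ_le {u : ℝ} (hu : 0 ≤ u) (h : P.p - P.δ + c.excess + u * (c.excess / P.T) ≤ 1) :
    u * P.δ ≤ 4 * P.T := by
  have hquarter : P.δ / 4 ≤ c.excess :=
    (le_mul_of_one_le_right (by linarith [P.δ_pos]) (Real.one_le_exp c.logGain_nonneg)).trans
      (P.quarter_mul_exp_le_excess c.card_spine_le _)
  have hgain : u * (c.excess / P.T) ≤ 1 := by linarith [P.δ_lt_p, c.excess_pos]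
  rw [← mul_div_assoc, div_le_one P.T_pos] at hgain
  nlinarith

lemma cost_le (hexcess : c.excess ≤ 1) :
    c.cost ≤ 23 * P.w * P.T + 44 / P.w * P.T * Real.log (4 / P.δ) := by
  have hw := P.w_pos
  unfold cost
  gcongr
  · exact c.card_spine_le
  · exact c.logGain_le hexcess

lemma boosts_le (hexcess : c.excess ≤ 1) :
    (c.boosts : ℝ) ≤ 2 * P.T * Real.log (4 / P.δ) / P.w ^ 2 := by
  have hw := P.w_pos
  have hT := P.T_pos
  have hlog : c.boosts * (P.w ^ 2 / (2 * P.T)) ≤ Real.log (4 / P.δ) :=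
    calc c.boosts * (P.w ^ 2 / (2 * P.T))
        ≤ c.boosts * Real.log (1 + P.w ^ 2 / P.T) := by
          gcongr
          exact P.w_sq_div_le_log
      _ ≤ c.logGain := c.boosts_mul_log_le
      _ ≤ Real.log (4 / P.δ) := c.logGain_le hexcess
  rw [← mul_div_assoc, div_le_iff₀ (by positivity)] at hlog
  rw [le_div_iff₀ (by positivity)]
  linarith

lemma pow_rank_add_one_mul_card_le (hY : (P.p - P.δ + c.excess) * #c.pages ≤ #Y) :
    (P.p - P.δ) ^ (c.rank + 1) * #S ≤ #Y := by
  have hp : 0 ≤ P.p - P.δ := sub_nonneg.2 P.δ_lt_p.le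
  have hexcess := c.excess_pos
  calc (P.p - P.δ) ^ (c.rank + 1) * #S = (P.p - P.δ) * ((P.p - P.δ) ^ c.rank * #S) := by ring
    _ ≤ (P.p - P.δ) * #c.pages := mul_le_mul_of_nonneg_left c.le_card_pages hp
    _ ≤ (P.p - P.δ + c.excess) * #c.pages := by gcongr; linarith
    _ ≤ #Y := hY

/-- The side obtained by adding `x` to the spine and shrinking the pages to `Y`. -/
def extend [DecidableEq V] (hT : #c.spine < P.T) (hx : x ∉ c.spine) (hxS : x ∈ S)
    (hY : Y ⊆ neighborsIn H x c.pages) (hcardY : (P.p - P.δ + c.excess) * #c.pages ≤ #Y) :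
    BookSide P H S where
  spine := insert x c.spine
  pages := Y
  boosts := c.boosts
  logGain := c.logGain
  spine_subset := insert_subset hxS c.spine_subset
  pages_subset := (hY.trans (neighborsIn_subset H x _)).trans c.pages_subset
  isCompleteBetween := by
    rw [coe_insert]
    exact isCompleteBetween_insert c.isCompleteBetween
      (coe_subset.2 (hY.trans (neighborsIn_subset H x _))) fun y hy => (mem_neighborsIn.1 (hY hy)).2
  card_spine_le := (card_insert_of_notMem hx).trans_le hT
  le_card_pages := by
    rw [card_insert_of_notMem hx, add_right_comm]
    exact c.pow_rank_add_one_mul_card_le hcardY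
  boosts_mul_log_le := c.boosts_mul_log_le

/-- The side obtained by shrinking the pages to `Y` in order to multiply the excess density by
`1 + u / P.T`. -/
noncomputable def boost {u : ℝ} (hu : P.w ^ 2 < u) (hY : Y ⊆ c.pages)
    (hcardY : (P.p - P.δ + c.excess) * #c.pages ≤ #Y) : BookSide P H S where
  spine := c.spine
  pages := Y
  boosts := c.boosts + 1
  logGain := c.logGain + Real.log (1 + u / P.T)
  spine_subset := c.spine_subset
  pages_subset := hY.trans c.pages_subset
  isCompleteBetween _ ha _ hy := c.isCompleteBetween ha (hY hy)
  card_spine_le := c.card_spine_le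
  le_card_pages := c.pow_rank_add_one_mul_card_le hcardY
  boosts_mul_log_le := by
    rw [Nat.cast_add_one, add_one_mul]
    gcongr
    exact c.boosts_mul_log_le

end BookSide

/-- A state of the book algorithm on the vertex set `S`: a multicolour book with its common
`reservoir`, and for each colour a separate set of pages into which all reservoir vertices have
high density. -/
structure BookState (P : BookParams) (G : Fin 2 → SimpleGraph V) (S : Finset V) where
  reservoir : Finset V
  side : ∀ i, BookSide P (G i) S
  reservoir_subset : reservoir ⊆ S
  isMultiBook : IsMultiBook G (fun i => (side i).spine) reservoir
  le_card_reservoir : Real.exp (-∑ i, (side i).cost) * #S ≤ #reservoir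
  degree : ∀ i, ∀ x ∈ reservoir, (P.p - P.δ + (side i).excess) * #(side i).pages ≤
    #(neighborsIn (G i) x (side i).pages)

namespace BookState

variable {P : BookParams} {G : Fin 2 → SimpleGraph V} {S X Y : Finset V} {x : V} {j : Fin 2}
  (s : BookState P G S)

/-- The number of steps made by the book algorithm to arrive at the state `s`. -/
def rank : ℕ := ∑ i, (s.side i).rank

/-- The initial state of the book algorithm. -/
def initial (hdeg : ∀ i, ∀ x ∈ S, P.p * #S ≤ #(neighborsIn (G i) x S)) : BookState P G S where
  reservoir := S
  side i := BookSide.initial P (G i) S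
  reservoir_subset := subset_rfl
  isMultiBook := isMultiBook_empty G S
  le_card_reservoir := by simp [BookSide.cost, BookSide.initial]
  degree i x hx := by
    simpa [BookSide.excess, BookSide.initial, BookParams.excess] using hdeg i x hx

lemma reservoir_nonempty (hS : S.Nonempty) : s.reservoir.Nonempty := by
  exact card_pos.1 (Nat.cast_pos.1 (lt_of_lt_of_le (by positivity) s.le_card_reservoir))

lemma excess_le_one (hS : S.Nonempty) (i : Fin 2) : (s.side i).excess ≤ 1 := by
  obtain ⟨x, hx⟩ := s.reservoir_nonempty hS
  have hdensity :=
    le_one_of_mul_card_le_card_neighborsIn ((s.side i).pages_nonempty hS) (s.degree i x hx)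
  linarith [P.δ_lt_p]

lemma exp_le_card_reservoir (hS : P.size ≤ #S) : Real.exp (23 * P.w) ≤ #s.reservoir := by
  have hw := P.w_pos
  have hne : S.Nonempty := P.nonempty_of_size_le hS
  refine le_trans ?_ s.le_card_reservoir
  refine le_trans ?_ (mul_le_mul_of_nonneg_left hS (Real.exp_pos _).le)
  rw [BookParams.size, ← Real.exp_add, Real.exp_le_exp, Fin.sum_univ_two]
  have h₀ := (s.side 0).cost_le (s.excess_le_one hne 0)
  have h₁ := (s.side 1).cost_le (s.excess_le_one hne 1)
  calc 23 * P.w ≤ -(2 * (23 * P.w * P.T + 44 / P.w * P.T * Real.log (4 / P.δ))) +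
        (46 * P.w * (P.T + 1) + 88 * P.T * Real.log (4 / P.δ) / P.w) := by
        ring_nf
        linarith
    _ ≤ _ := by linarith

lemma rank_le (hS : S.Nonempty) :
    (s.rank : ℝ) ≤ 2 * (P.T + 2 * P.T * Real.log (4 / P.δ) / P.w ^ 2) := by
  have hside (i) : ((s.side i).rank : ℝ) ≤ P.T + 2 * P.T * Real.log (4 / P.δ) / P.w ^ 2 := by
    rw [BookSide.rank, Nat.cast_add]
    exact add_le_add (Nat.cast_le.2 (s.side i).card_spine_le)
      ((s.side i).boosts_le (s.excess_le_one hS i))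
  rw [rank, Fin.sum_univ_two, Nat.cast_add, two_mul]
  exact add_le_add (hside 0) (hside 1)

lemma exists_rank_add_one_of_update (c : BookSide P (G j) S) (hX : X ⊆ s.reservoir)
    (hrank : c.rank = (s.side j).rank + 1)
    (hbook : IsMultiBook G (Function.update (fun i => (s.side i).spine) j c.spine) X)
    (hcardX : Real.exp ((s.side j).cost - c.cost) * #s.reservoir ≤ #X)
    (hdeg : ∀ x ∈ X, (P.p - P.δ + c.excess) * #c.pages ≤ #(neighborsIn (G j) x c.pages)) :
    ∃ s' : BookState P G S, s'.rank = s.rank + 1 := by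
  refine ⟨{
    reservoir := X
    side := Function.update s.side j c
    reservoir_subset := hX.trans s.reservoir_subset
    isMultiBook := ?_
    le_card_reservoir := ?_
    degree := ?_ }, sum_update_eq_sum_add (fun _ => BookSide.rank) s.side hrank⟩
  · convert hbook using 1
    exact funext (Function.apply_update (fun _ => BookSide.spine) s.side j c)
  · rw [sum_update_eq_sum_add (fun _ => BookSide.cost) s.side (add_sub_cancel _ _).symm]
    refine le_trans ?_ hcardX
    refine le_of_eq_of_le ?_ (mul_le_mul_of_nonneg_left s.le_card_reservoir (Real.exp_pos _).le)
    rw [← mul_assoc, ← Real.exp_add]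
    ring_nf
  · exact (Function.forall_update_iff s.side fun i c' => ∀ x ∈ X,
      (P.p - P.δ + c'.excess) * #c'.pages ≤ #(neighborsIn (G i) x c'.pages)).2
      ⟨hdeg, fun i _ x hx => s.degree i x (hX hx)⟩

lemma exists_rank_add_one_of_extend (hT : #(s.side j).spine < P.T) (hx : x ∈ s.reservoir)
    (hX : X ⊆ neighborsIn (G j) x s.reservoir) (hY : Y ⊆ neighborsIn (G j) x (s.side j).pages)
    (hcardX : Real.exp (-(23 * P.w)) * #s.reservoir ≤ #X)
    (hcardY : (P.p - P.δ + (s.side j).excess) * #(s.side j).pages ≤ #Y)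
    (hdeg : ∀ y ∈ X, (P.p - P.δ + (s.side j).excess - (s.side j).excess / P.T) * #Y ≤
      #(neighborsIn (G j) y Y)) :
    ∃ s' : BookState P G S, s'.rank = s.rank + 1 := by
  classical
  have hxspine : x ∉ (s.side j).spine := s.isMultiBook.notMem_spine hx j
  have hcard := card_insert_of_notMem hxspine
  refine s.exists_rank_add_one_of_update
    ((s.side j).extend hT hxspine (s.reservoir_subset hx) hY hcardY)
    (hX.trans (neighborsIn_subset _ _ _)) ?_ (s.isMultiBook.insert hx hX) ?_ ?_
  · simp only [BookSide.rank, BookSide.extend, hcard]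
    ring
  · convert hcardX using 3
    simp only [BookSide.cost, BookSide.extend, hcard, Nat.cast_add_one]
    ring
  · simpa only [BookSide.excess, BookSide.extend, hcard, BookParams.excess_succ, add_sub_assoc]
      using hdeg

lemma exists_rank_add_one_of_boost {n : ℕ} (hn : P.w ^ 2 < (n : ℝ) - 1) (hS : S.Nonempty)
    (hX : X ⊆ s.reservoir) (hY : Y ⊆ (s.side j).pages)
    (hcardX : 1 / 28 * Real.exp (-(9 * √n)) * #s.reservoir ≤ #X)
    (hcardY : (P.p - P.δ + (s.side j).excess) * #(s.side j).pages ≤ #Y)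
    (hdeg : ∀ y ∈ X, (P.p - P.δ + (s.side j).excess +
      (n - 1) * ((s.side j).excess / P.T)) * #Y ≤ #(neighborsIn (G j) y Y)) :
    ∃ s' : BookState P G S, s'.rank = s.rank + 1 := by
  have hu : 0 < (n : ℝ) - 1 := (sq_nonneg P.w).trans_lt hn
  have hXne : X.Nonempty := by
    have hpos : (0 : ℝ) < #s.reservoir := Nat.cast_pos.2 (s.reservoir_nonempty hS).card_pos
    exact card_pos.1 (Nat.cast_pos.1 (lt_of_lt_of_le (by positivity) hcardX))
  have hYne : Y.Nonempty := by
    have hpages := (s.side j).pages_nonempty hS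
    have hdensity : 0 < P.p - P.δ + (s.side j).excess :=
      add_pos (sub_pos.2 P.δ_lt_p) (s.side j).excess_pos
    exact card_pos.1 (Nat.cast_pos.1 (lt_of_lt_of_le (by positivity) hcardY))
  have hnδ : ((n : ℝ) - 1) * P.δ ≤ 4 * P.T := by
    obtain ⟨y, hy⟩ := hXne
    exact (s.side j).mul_δ_le hu.le (le_one_of_mul_card_le_card_neighborsIn hYne (hdeg y hy))
  refine s.exists_rank_add_one_of_update ((s.side j).boost hn hY hcardY) hX rfl ?_ ?_ ?_
  · convert s.isMultiBook.mono hX using 1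
    exact Function.update_eq_self j fun i => (s.side i).spine
  · refine le_trans ?_ hcardX
    gcongr
    refine le_of_eq_of_le ?_ (P.exp_neg_log_le hn hnδ)
    simp only [BookSide.cost, BookSide.boost]
    ring_nf
  · have hlog : 0 < 1 + ((n : ℝ) - 1) / P.T := add_pos one_pos (div_pos hu P.T_pos)
    simpa only [BookSide.excess, BookSide.boost, P.excess_add_log _ _ hlog, ← add_assoc] using hdeg

/-- A step with small correlation (`n - 1 ≤ w²`) costs the reservoir only a factor `exp (23 w)`,
even when the reservoir is then restricted to its more popular colour at `x`. -/
lemma exists_color (hG : IsColoring G S) (hS : P.size ≤ #S) (hx : x ∈ s.reservoir)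
    (hX : X ⊆ s.reservoir) {n : ℕ} (hn : (n : ℝ) - 1 ≤ P.w ^ 2)
    (hcard : 1 / 28 * Real.exp (-(9 * √n)) * #s.reservoir ≤ #X) :
    ∃ j, Real.exp (-(23 * P.w)) * #s.reservoir ≤ #(neighborsIn (G j) x X) := by
  have hw := P.one_le_w
  have hsqrt : √n ≤ 2 * P.w := Real.sqrt_le_iff.2 ⟨by positivity, by nlinarith⟩
  have hexp : (112 : ℝ) ≤ Real.exp (5 * P.w) := by
    calc (112 : ℝ) ≤ 2.7 ^ 5 := by norm_num
      _ ≤ Real.exp 1 ^ 5 := by gcongr; linarith [Real.exp_one_gt_d9]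
      _ = Real.exp 5 := by rw [← Real.exp_nat_mul]; norm_num
      _ ≤ Real.exp (5 * P.w) := Real.exp_le_exp.2 (by linarith)
  have hlarge : 4 * (Real.exp (-(23 * P.w)) * #s.reservoir) ≤ #X := by
    refine le_trans ?_ hcard
    calc 4 * (Real.exp (-(23 * P.w)) * #s.reservoir)
        = 1 / 28 * (112 * Real.exp (-(23 * P.w))) * #s.reservoir := by ring
      _ ≤ 1 / 28 * (Real.exp (5 * P.w) * Real.exp (-(23 * P.w))) * #s.reservoir := by gcongr
      _ ≤ 1 / 28 * Real.exp (-(9 * √n)) * #s.reservoir := by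
          rw [← Real.exp_add]
          gcongr
          linarith
  have hone : 1 ≤ Real.exp (-(23 * P.w)) * #s.reservoir := by
    rw [Real.exp_neg, inv_mul_eq_div, one_le_div (Real.exp_pos _)]
    exact s.exp_le_card_reservoir hS
  have hsum : (#X : ℝ) ≤ #(neighborsIn (G 0) x X) + #(neighborsIn (G 1) x X) + 1 := by
    have h := hG.card_le_sum_neighborsIn_add_one (s.reservoir_subset hx)
      (hX.trans s.reservoir_subset)
    rw [Fin.sum_univ_two] at h
    exact_mod_cast h
  by_contra! hlt
  linarith [hlt 0, hlt 1]

lemma exists_rank_add_one (hG : IsColoring G S) (hS : P.size ≤ #S)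
    (hT : ∀ i, #(s.side i).spine < P.T) : ∃ s' : BookState P G S, s'.rank = s.rank + 1 := by
  have hne : S.Nonempty := P.nonempty_of_size_le hS
  obtain ⟨x, hx, l, n, Y, X, hX, hY, hcardY, hcardX, hdeg, hboost⟩ :=
    exists_common_neighborsIn (s.reservoir_nonempty hne) (fun i => (s.side i).pages_nonempty hne)
      (fun i => add_pos (sub_pos.2 P.δ_lt_p) (s.side i).excess_pos)
      (fun i => div_pos (s.side i).excess_pos P.T_pos) s.degree
  rcases le_or_gt ((n : ℝ) - 1) (P.w ^ 2) with hn | hn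
  · obtain ⟨j, hj⟩ := s.exists_color hG hS hx hX hn hcardX
    exact s.exists_rank_add_one_of_extend (hT j) hx (neighborsIn_mono _ _ hX) (hY j) hj (hcardY j)
      fun y hy => hdeg j y (neighborsIn_subset _ _ _ hy)
  · exact s.exists_rank_add_one_of_boost hn hne hX ((hY l).trans (neighborsIn_subset _ _ _)) hcardX
      (hcardY l) hboost

lemma exists_card_spine_eq (hG : IsColoring G S) (hS : P.size ≤ #S)
    (hdeg : ∀ i, ∀ x ∈ S, P.p * #S ≤ #(neighborsIn (G i) x S)) :
    ∃ (s : BookState P G S) (i : Fin 2), #(s.side i).spine = P.T := by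
  by_contra! hspine
  have hrank : ∀ r, ∃ s : BookState P G S, s.rank = r := by
    intro r
    induction r with
    | zero => exact ⟨initial hdeg, by simp [rank, initial, BookSide.rank, BookSide.initial]⟩
    | succ r ih =>
      obtain ⟨s, rfl⟩ := ih
      exact s.exists_rank_add_one hG hS fun i => ((s.side i).card_spine_le).lt_of_ne (hspine s i)
  obtain ⟨r, hr⟩ := exists_nat_gt (2 * (P.T + 2 * P.T * Real.log (4 / P.δ) / P.w ^ 2))
  obtain ⟨s, rfl⟩ := hrank r
  exact hr.not_ge (s.rank_le (P.nonempty_of_size_le hS))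

end BookState

/-- The book theorem of Balister, Bollobás, Campos, Griffiths, Hurley, Morris, Sahasrabudhe and
Tiba for two colours. -/
theorem exists_large_book (P : BookParams) {G : Fin 2 → SimpleGraph V} {S : Finset V}
    (hG : IsColoring G S) (hS : P.size ≤ #S)
    (hdeg : ∀ i, ∀ x ∈ S, P.p * #S ≤ #(neighborsIn (G i) x S)) :
    ∃ (i : Fin 2) (A Y : Finset V) (b : ℕ), A ⊆ S ∧ Y ⊆ S ∧ (G i).IsClique (A : Set V) ∧
      (G i).IsCompleteBetween A Y ∧ #A = P.T ∧ (P.p - P.δ) ^ (P.T + b) * #S ≤ #Y ∧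
      (b : ℝ) ≤ 2 * P.T * Real.log (4 / P.δ) / P.w ^ 2 := by
  obtain ⟨s, i, hcard⟩ := BookState.exists_card_spine_eq hG hS hdeg
  have hne : S.Nonempty := P.nonempty_of_size_le hS
  exact ⟨i, (s.side i).spine, (s.side i).pages, (s.side i).boosts, (s.side i).spine_subset,
    (s.side i).pages_subset, s.isMultiBook.isClique i, (s.side i).isCompleteBetween, hcard,
    hcard ▸ (s.side i).le_card_pages, (s.side i).boosts_le (s.excess_le_one hne i)⟩

end BookAlgorithm

/-! ### Exponentially improved Ramsey bounds -/

section RamseyBounds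

variable {V : Type*} {G : Fin 2 → SimpleGraph V} {S : Finset V} {k : Fin 2 → ℕ}

lemma HasMonoClique.of_choose_le (hG : IsColoring G S) (h : (∑ i, k i).choose (k 0) ≤ #S) :
    HasMonoClique G k S := by
  have hle (i) : k i ≤ ∑ i, k i := single_le_sum (fun _ _ => Nat.zero_le _) (mem_univ i)
  induction hs : ∑ i, k i generalizing k S with
  | zero => exact .of_eq_zero (Nat.le_zero.1 (hs ▸ hle 0))
  | succ s ih =>
    by_cases! hzero : ∃ i, k i = 0
    · exact .of_eq_zero hzero.choose_spec
    obtain ⟨x, hx⟩ := card_pos.1 ((Nat.choose_pos (hle 0)).trans_le h)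
    obtain ⟨a, ha⟩ : ∃ a, k 0 = a + 1 := Nat.exists_eq_succ_of_ne_zero (hzero 0)
    obtain ⟨j, hj⟩ : ∃ j, s.choose ((k - Pi.single j 1 : Fin 2 → ℕ) 0) ≤
        #(neighborsIn (G j) x S) := by
      have hcard := hG.card_le_sum_neighborsIn_add_one hx subset_rfl
      rw [Fin.sum_univ_two] at hcard
      rw [hs, ha, Nat.choose_succ_succ'] at h
      by_contra! hlt
      have hlt₀ := hlt 0
      have hlt₁ := hlt 1
      simp only [Pi.sub_apply, ha, Pi.single_eq_same, ne_eq, zero_ne_one, not_false_eq_true,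
        Pi.single_eq_of_ne, add_tsub_cancel_right, tsub_zero] at hlt₀ hlt₁
      omega
    have hsum := (sum_sub_single_add (Nat.one_le_iff_ne_zero.2 (hzero j))).trans hs
    rw [Nat.add_right_cancel_iff] at hsum
    exact .of_neighborsIn hx (ih (hG.mono (neighborsIn_subset _ _ _)) (by rwa [hsum])
      (fun i => single_le_sum (fun _ _ => Nat.zero_le _) (mem_univ i)) hsum)

/-- This is Hoeffding's bound for the binomial distribution with parameter `1 / 2`. -/
lemma choose_le_two_pow_mul_exp (a b : ℕ) :
    ((a + b).choose a : ℝ) ≤ 2 ^ (a + b) * Real.exp (-(((a : ℝ) - b) ^ 2 / (2 * (a + b)))) := by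
  rcases Nat.eq_zero_or_pos (a + b) with h | h
  · obtain ⟨rfl, rfl⟩ := Nat.add_eq_zero_iff.1 h
    simp
  have hs : (0 : ℝ) < a + b := by exact_mod_cast h
  set θ : ℝ := (a - b) / (a + b) with hθ
  have hterm : Real.exp θ ^ a * Real.exp (-θ) ^ b * ((a + b).choose a : ℝ) ≤
      (Real.exp θ + Real.exp (-θ)) ^ (a + b) := by
    rw [add_pow]
    have hle := single_le_sum (f := fun m => Real.exp θ ^ m * Real.exp (-θ) ^ (a + b - m) *
      ((a + b).choose m : ℝ)) (fun m _ => by positivity) (mem_range.2 (by omega : a < a + b + 1))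
    simpa only [Nat.add_sub_cancel_left] using hle
  have hcosh : Real.exp θ + Real.exp (-θ) ≤ 2 * Real.exp (θ ^ 2 / 2) := by
    have hle := Real.cosh_le_exp_half_sq θ
    rw [Real.cosh_eq] at hle
    linarith
  rw [← Real.exp_nat_mul, ← Real.exp_nat_mul, ← Real.exp_add] at hterm
  refine le_of_mul_le_mul_left (hterm.trans ?_) (Real.exp_pos _)
  calc (Real.exp θ + Real.exp (-θ)) ^ (a + b) ≤ (2 * Real.exp (θ ^ 2 / 2)) ^ (a + b) := by gcongr
    _ = 2 ^ (a + b) * Real.exp (a * θ + b * -θ + -(((a : ℝ) - b) ^ 2 / (2 * (a + b)))) := by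
        rw [mul_pow, ← Real.exp_nat_mul, hθ]
        congr 2
        push_cast
        field_simp
        ring
    _ = _ := by rw [Real.exp_add]; ring

lemma HasMonoClique.of_exp_le (hG : IsColoring G S)
    (h : 2 ^ (∑ i, k i) * Real.exp (-(((k 0 : ℝ) - k 1) ^ 2 / (2 * ∑ i, k i))) ≤ #S) :
    HasMonoClique G k S := by
  refine .of_choose_le hG ((Nat.cast_le (α := ℝ)).1 (le_trans ?_ h))
  simpa only [Fin.sum_univ_two, Nat.cast_add] using choose_le_two_pow_mul_exp (k 0) (k 1)

lemma HasMonoClique.of_mul_sum_le_abs_sub (hG : IsColoring G S) {c : ℝ} (hc : 0 ≤ c)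
    (hk : c * ↑(∑ i, k i) ≤ |(k 0 : ℝ) - k 1|)
    (h : 2 ^ (∑ i, k i) * Real.exp (-(c ^ 2 / 2 * ↑(∑ i, k i))) ≤ #S) : HasMonoClique G k S := by
  refine .of_exp_le hG (le_trans ?_ h)
  gcongr 2 ^ _ * Real.exp (-?_)
  rcases (Nat.cast_nonneg (α := ℝ) (∑ i, k i)).eq_or_lt with hs | hs
  · rw [← hs, mul_zero, mul_zero, div_zero]
  · calc c ^ 2 / 2 * ↑(∑ i, k i) = (c * ↑(∑ i, k i)) ^ 2 / (2 * ↑(∑ i, k i)) := by field_simp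
      _ ≤ |(k 0 : ℝ) - k 1| ^ 2 / (2 * ↑(∑ i, k i)) := by gcongr
      _ = _ := by rw [sq_abs]

lemma IsColoring.mul_card_le_card_neighborsIn (hG : IsColoring G S) {η : ℝ}
    (hdeg : ∀ i, ∀ x ∈ S, #(neighborsIn (G i) x S) ≤ (1 / 2 + η) * #S) (hS : 1 ≤ η * #S) :
    ∀ i, ∀ x ∈ S, (1 / 2 - 2 * η) * #S ≤ #(neighborsIn (G i) x S) := by
  intro i x hx
  have hcard : (#S : ℝ) ≤ ∑ i, #(neighborsIn (G i) x S) + 1 := by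
    exact_mod_cast hG.card_le_sum_neighborsIn_add_one hx subset_rfl
  rw [Fin.sum_univ_two] at hcard
  push_cast at hcard
  have h₀ := hdeg 0 x hx
  have h₁ := hdeg 1 x hx
  fin_cases i
  · rw [Fin.zero_eta]
    linarith
  · rw [Fin.mk_one]
    linarith

end RamseyBounds

/-- Constants for the descent: `1 / 2 + η` is the density that counts as an increment and `w` the
parameter of the book algorithm, which is run on `k` with `∑ i, k i` between `M * n` and
`2 * M * n` in order to build a spine of size `4 * n`. -/
structure DescentParams where
  M : ℕ
  η : ℝ
  w : ℝ
  η_pos : 0 < η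
  η_le : η ≤ 1 / 12
  one_le_w : 1 ≤ w
  size_le : 230 * w + 352 * Real.log (4 / η) / w + 1 ≤ M / 2
  loss_le : 16 * Real.log (4 / η) / w ^ 2 + 50 * η ≤ 9 / (4 * M)

namespace DescentParams

lemma nonempty : Nonempty DescentParams := by
  have hlog : Real.log (4 / (1 / 2 ^ 36)) ≤ 27 := by
    rw [show (4 : ℝ) / (1 / 2 ^ 36) = 2 ^ 38 by norm_num, Real.log_pow]
    push_cast
    linarith [Real.log_two_lt_d9]
  refine ⟨{ M := 2 ^ 30, η := 1 / 2 ^ 36, w := 2 ^ 20, η_pos := by positivity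
            η_le := by norm_num, one_le_w := by norm_num, size_le := ?_, loss_le := ?_ }⟩
  · calc (230 * 2 ^ 20 + 352 * Real.log (4 / (1 / 2 ^ 36)) / 2 ^ 20 + 1 : ℝ)
        ≤ 230 * 2 ^ 20 + 352 * 27 / 2 ^ 20 + 1 := by gcongr
      _ ≤ (2 ^ 30 : ℕ) / 2 := by norm_num
  · calc (16 * Real.log (4 / (1 / 2 ^ 36)) / (2 ^ 20) ^ 2 + 50 * (1 / 2 ^ 36) : ℝ)
        ≤ 16 * 27 / (2 ^ 20) ^ 2 + 50 * (1 / 2 ^ 36) := by gcongr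
      _ ≤ 9 / (4 * (2 ^ 30 : ℕ)) := by norm_num

variable (D : DescentParams) {n : ℕ}

lemma log_nonneg : 0 ≤ Real.log (4 / D.η) := by
  refine Real.log_nonneg ((one_le_div D.η_pos).2 ?_)
  linarith [D.η_le]

lemma twelve_le_M : 12 ≤ D.M := by
  have hlog : 0 ≤ 352 * Real.log (4 / D.η) / D.w :=
    div_nonneg (mul_nonneg (by norm_num) D.log_nonneg) (zero_le_one.trans D.one_le_w)
  have hM : (12 : ℝ) ≤ D.M := by linarith [D.size_le, D.one_le_w]
  exact_mod_cast hM

lemma M_pos : (0 : ℝ) < D.M := Nat.cast_pos.2 ((by norm_num : 0 < 12).trans_le D.twelve_le_M)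

lemma one_le_n (hn : D.w ^ 2 ≤ n * D.η) : (1 : ℝ) ≤ n :=
  calc (1 : ℝ) ≤ D.w ^ 2 := one_le_pow₀ D.one_le_w
    _ ≤ n * D.η := hn
    _ ≤ n * 1 := by gcongr; linarith [D.η_le]
    _ = n := mul_one _

/-- The parameters with which the book algorithm is run in the descent. -/
noncomputable def book (n : ℕ) (hn : D.w ^ 2 ≤ n * D.η) : BookParams where
  T := 4 * n
  p := 1 / 2 - 2 * D.η
  δ := D.η
  w := D.w
  δ_pos := D.η_pos
  δ_lt_p := by linarith [D.η_le]
  δ_le_one := by linarith [D.η_le]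
  one_le_w := D.one_le_w
  four_mul_w_sq_le := by
    push_cast
    linarith

lemma exp_le_two_pow {s : ℕ} (hs : D.M * n ≤ s) :
    Real.exp ((D.M / 2 - 1) * n) ≤ 2 ^ s * Real.exp (-(2 * D.η * n)) := by
  have hs' : (D.M : ℝ) * n ≤ s := by exact_mod_cast hs
  have hη : 2 * D.η * n ≤ 1 * n := by
    gcongr
    linarith [D.η_le]
  have hlog : (s : ℝ) * (1 / 2) ≤ s * Real.log 2 := by
    gcongr
    linarith [Real.log_two_gt_d9]
  rw [← Real.exp_log (two_pos : (0 : ℝ) < 2), ← Real.exp_nat_mul, ← Real.exp_add, Real.exp_le_exp,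
    Real.exp_log two_pos]
  linarith

lemma size_book_le (hn : D.w ^ 2 ≤ n * D.η) {s : ℕ} (hs : D.M * n ≤ s) :
    (D.book n hn).size ≤ 2 ^ s * Real.exp (-(2 * D.η * n)) := by
  refine le_trans (Real.exp_le_exp.2 ?_) (D.exp_le_two_pow hs)
  have hw := zero_lt_one.trans_le D.one_le_w
  have h := mul_le_mul_of_nonneg_right D.size_le (Nat.cast_nonneg (α := ℝ) n)
  simp only [book]
  push_cast
  calc 46 * D.w * (4 * n + 1) + 88 * (4 * n) * Real.log (4 / D.η) / D.w
      ≤ 46 * D.w * (4 * n + n) + 88 * (4 * n) * Real.log (4 / D.η) / D.w := by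
        gcongr
        exact D.one_le_n hn
    _ = (230 * D.w + 352 * Real.log (4 / D.η) / D.w + 1) * n - n := by ring
    _ ≤ (D.M / 2 - 1) * n := by linarith

lemma half_mul_exp_le : 1 / 2 * Real.exp (-(12 * D.η)) ≤ 1 / 2 - 2 * D.η - D.η := by
  have hη := D.η_pos
  have hexp : Real.exp (-(12 * D.η)) ≤ 1 - 6 * D.η := by
    rw [Real.exp_neg]
    calc (Real.exp (12 * D.η))⁻¹ ≤ (12 * D.η + 1)⁻¹ :=
          inv_anti₀ (by positivity) (Real.add_one_le_exp _)
      _ ≤ 1 - 6 * D.η := by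
          rw [inv_le_iff_one_le_mul₀ (by positivity)]
          nlinarith [D.η_le]
  linarith

lemma le_mul_two_pow {s b : ℕ} (hb : b ≤ 2 * (4 * n) * Real.log (4 / D.η) / D.w ^ 2) :
    2 ^ s * Real.exp (-(9 * n / (4 * D.M))) ≤
      (1 / 2 - 2 * D.η - D.η) ^ (4 * n + b) * (2 ^ (s + 4 * n) * Real.exp (-(2 * D.η * n))) := by
  have hloss : b + 12 * D.η * (4 * n + b) + 2 * D.η * n ≤ 9 * n / (4 * D.M) := by
    have h := mul_le_mul_of_nonneg_right D.loss_le (Nat.cast_nonneg (α := ℝ) n)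
    have hη : 12 * D.η * b ≤ 1 * b := by
      gcongr
      linarith [D.η_le]
    calc b + 12 * D.η * (4 * n + b) + 2 * D.η * n
        ≤ 2 * (2 * (4 * n) * Real.log (4 / D.η) / D.w ^ 2) + 50 * D.η * n := by linarith
      _ = (16 * Real.log (4 / D.η) / D.w ^ 2 + 50 * D.η) * n := by ring
      _ ≤ 9 / (4 * D.M) * n := h
      _ = 9 * n / (4 * D.M) := by ring
  have htwo : Real.exp (-1) ≤ 1 / 2 := by
    rw [Real.exp_neg, one_div]
    exact inv_anti₀ two_pos (by linarith [Real.exp_one_gt_d9])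
  calc 2 ^ s * Real.exp (-(9 * n / (4 * D.M)))
      ≤ 2 ^ s * Real.exp (b * -1 + (4 * n + b : ℕ) * -(12 * D.η) + -(2 * D.η * n)) := by
        gcongr
        push_cast
        linarith
    _ = 2 ^ s * (Real.exp (-1) ^ b * Real.exp (-(12 * D.η)) ^ (4 * n + b) *
          Real.exp (-(2 * D.η * n))) := by
        rw [Real.exp_add, Real.exp_add, Real.exp_nat_mul, Real.exp_nat_mul]
    _ ≤ 2 ^ s * ((1 / 2) ^ b * Real.exp (-(12 * D.η)) ^ (4 * n + b) *
          Real.exp (-(2 * D.η * n))) := by gcongr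
    _ = (1 / 2 * Real.exp (-(12 * D.η))) ^ (4 * n + b) *
          (2 ^ (s + 4 * n) * Real.exp (-(2 * D.η * n))) := by
        rw [mul_pow, pow_add (1 / 2 : ℝ), pow_add 2 s, one_div_pow 2 (4 * n)]
        field_simp
    _ ≤ _ := by
        gcongr
        exact D.half_mul_exp_le

variable {V : Type*} {G : Fin 2 → SimpleGraph V} {S : Finset V} {k : Fin 2 → ℕ}

lemma five_mul_le (hsum : D.M * n ≤ ∑ i, k i) (hbal : ∀ i j, k i ≤ k j + n) (i : Fin 2) :
    5 * n ≤ k i := by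
  have hM := Nat.mul_le_mul_right n D.twelve_le_M
  have h₀ := hbal 0 i
  have h₁ := hbal 1 i
  rw [Fin.sum_univ_two] at hsum
  omega

lemma three_mul_le_abs_sub (hsum : D.M * n ≤ ∑ i, k i) (hbal : ∀ i j, k i ≤ k j + n) (j : Fin 2)
    {k' : Fin 2 → ℕ} (hk' : k' = k - Pi.single j (4 * n)) :
    3 * (n : ℝ) ≤ |(k' 0 : ℝ) - k' 1| := by
  have hj := D.five_mul_le hsum hbal j
  have h₀₁ := hbal 0 1
  have h₁₀ := hbal 1 0
  have hgap : k' 0 + 3 * n ≤ k' 1 ∨ k' 1 + 3 * n ≤ k' 0 := by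
    rw [hk', Pi.sub_apply, Pi.sub_apply, Pi.single_apply, Pi.single_apply]
    fin_cases j
    · left; simp only [Fin.zero_eta, ↓reduceIte, one_ne_zero] at hj ⊢; omega
    · right; simp only [Fin.mk_one, ↓reduceIte, zero_ne_one] at hj ⊢; omega
  rw [le_abs]
  rcases hgap with hgap | hgap
  · right
    have hgap' : (k' 0 : ℝ) + 3 * n ≤ k' 1 := by exact_mod_cast hgap
    linarith
  · left
    have hgap' : (k' 1 : ℝ) + 3 * n ≤ k' 0 := by exact_mod_cast hgap
    linarith

lemma le_sq_sub_div (hn : 0 < n) (hsum : D.M * n ≤ ∑ i, k i) (hsum' : ∑ i, k i ≤ 2 * D.M * n)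
    (hbal : ∀ i j, k i ≤ k j + n) (j : Fin 2) {k' : Fin 2 → ℕ}
    (hk' : k' = k - Pi.single j (4 * n)) :
    9 * n / (4 * D.M) ≤ ((k' 0 : ℝ) - k' 1) ^ 2 / (2 * ↑(∑ i, k' i)) := by
  have hM := D.M_pos
  have hsub : ∑ i, k' i + 4 * n = ∑ i, k i := by
    rw [hk']
    exact sum_sub_single_add (by linarith [D.five_mul_le hsum hbal j])
  have hpos : 0 < ∑ i, k' i := by
    have hM' := Nat.mul_le_mul_right n D.twelve_le_M
    omega
  have hle : ((∑ i, k' i : ℕ) : ℝ) ≤ 2 * D.M * n := by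
    exact_mod_cast (Nat.le_add_right _ _).trans (hsub.trans_le hsum')
  have hdiff := D.three_mul_le_abs_sub hsum hbal j hk'
  calc 9 * n / (4 * D.M) = (3 * (n : ℝ)) ^ 2 / (2 * (2 * D.M * n)) := by
        field_simp
        norm_num
    _ ≤ |(k' 0 : ℝ) - k' 1| ^ 2 / (2 * ↑(∑ i, k' i)) := by gcongr
    _ = _ := by rw [sq_abs]

/-- The book algorithm ends with `4 * n` vertices in one colour, which unbalances the remaining
clique sizes so much that the Erdős–Szekeres bound suffices to finish. -/
lemma hasMonoClique_of_regular (hn : D.w ^ 2 ≤ n * D.η) (hG : IsColoring G S)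
    (hsum : D.M * n ≤ ∑ i, k i) (hsum' : ∑ i, k i ≤ 2 * D.M * n) (hbal : ∀ i j, k i ≤ k j + n)
    (hdeg : ∀ i, ∀ x ∈ S, (1 / 2 - 2 * D.η) * #S ≤ #(neighborsIn (G i) x S))
    (hS : 2 ^ (∑ i, k i) * Real.exp (-(2 * D.η * n)) ≤ #S) : HasMonoClique G k S := by
  have hn₀ : 0 < n := by exact_mod_cast zero_lt_one.trans_le (D.one_le_n hn)
  obtain ⟨j, A, Y, b, hA, hY, hclique, hAY, hcard, hYcard, hb⟩ :=
    exists_large_book (D.book n hn) hG ((D.size_book_le hn hsum).trans hS) hdeg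
  refine .of_isCompleteBetween hA hY hclique hAY (.of_exp_le (hG.mono hY) ?_)
  have hcard' : #A = 4 * n := hcard
  set k' : Fin 2 → ℕ := k - Pi.single j #A with hk'
  have hsub : ∑ i, k' i + 4 * n = ∑ i, k i := by
    rw [hk', hcard']
    exact sum_sub_single_add (by linarith [D.five_mul_le hsum hbal j])
  calc 2 ^ (∑ i, k' i) * Real.exp (-(((k' 0 : ℝ) - k' 1) ^ 2 / (2 * ↑(∑ i, k' i))))
      ≤ 2 ^ (∑ i, k' i) * Real.exp (-(9 * n / (4 * D.M))) := by
        gcongr 2 ^ _ * Real.exp (-?_)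
        exact D.le_sq_sub_div hn₀ hsum hsum' hbal j (hcard' ▸ hk')
    _ ≤ (1 / 2 - 2 * D.η - D.η) ^ (4 * n + b) *
          (2 ^ (∑ i, k' i + 4 * n) * Real.exp (-(2 * D.η * n))) := by
        refine D.le_mul_two_pow (hb.trans_eq ?_)
        simp only [book, Nat.cast_mul, Nat.cast_ofNat]
    _ ≤ (1 / 2 - 2 * D.η - D.η) ^ (4 * n + b) * #S := by
        rw [hsub]
        exact mul_le_mul_of_nonneg_left hS (pow_nonneg (by linarith [D.η_le]) _)
    _ ≤ #Y := hYcard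

lemma one_le_mul_card (hn : D.w ^ 2 ≤ n * D.η) (hsum : D.M * n ≤ ∑ i, k i)
    (hS : 2 ^ (∑ i, k i) * Real.exp (-(2 * D.η * n)) ≤ #S) : 1 ≤ D.η * #S := by
  have hM : (12 : ℝ) ≤ D.M := by exact_mod_cast D.twelve_le_M
  calc (1 : ℝ) ≤ D.w ^ 2 := one_le_pow₀ D.one_le_w
    _ ≤ D.η * n := hn.trans_eq (mul_comm _ _)
    _ ≤ D.η * #S := by
        refine mul_le_mul_of_nonneg_left ?_ D.η_pos.le
        calc (n : ℝ) ≤ (D.M / 2 - 1) * n + 1 := by nlinarith [D.one_le_n hn]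
          _ ≤ Real.exp ((D.M / 2 - 1) * n) := Real.add_one_le_exp _
          _ ≤ #S := (D.exp_le_two_pow hsum).trans hS

lemma one_add_pow_le_exp {r : ℕ} (hr : r ≤ n) : (1 + 2 * D.η) ^ r ≤ Real.exp (2 * D.η * n) := by
  have hη := D.η_pos
  calc (1 + 2 * D.η) ^ r ≤ (1 + 2 * D.η) ^ n := pow_le_pow_right₀ (by linarith) hr
    _ ≤ Real.exp (2 * D.η) ^ n := by
        gcongr
        linarith [Real.add_one_le_exp (2 * D.η)]
    _ = Real.exp (2 * D.η * n) := by rw [← Real.exp_nat_mul, mul_comm]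

/-- Passing to a neighbourhood of density `1 / 2 + η` gains a factor `1 + 2 * η` over the
Erdős–Szekeres recursion; when there is no such neighbourhood, the colouring is regular. -/
lemma hasMonoClique_of_balanced (hn : D.w ^ 2 ≤ n * D.η) (r : ℕ) (hG : IsColoring G S)
    (hsum : D.M * n + r ≤ ∑ i, k i) (hsum' : ∑ i, k i ≤ 2 * D.M * n)
    (hbal : ∀ i j, k i + r ≤ k j + n)
    (hS : 2 ^ (∑ i, k i) * ((1 + 2 * D.η) ^ r)⁻¹ ≤ #S) : HasMonoClique G k S := by
  have hη := D.η_pos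
  induction r generalizing k S with
  | zero =>
    rw [pow_zero, inv_one, mul_one] at hS
    exact .of_choose_le hG ((Nat.choose_le_two_pow _ _).trans (by exact_mod_cast hS))
  | succ r ih =>
    have hrn : r + 1 ≤ n := Nat.le_of_add_le_add_left (hbal 0 0)
    have hbal' (i j) : k i ≤ k j + n := (Nat.le_add_right _ _).trans (hbal i j)
    by_cases! hdense : ∃ i, ∃ x ∈ S, (1 / 2 + D.η) * #S ≤ #(neighborsIn (G i) x S)
    · obtain ⟨i, x, hx, hdense⟩ := hdense
      have hki : 1 ≤ k i := by linarith [D.five_mul_le (by omega) hbal' i]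
      have hsub : ∑ j, (k - Pi.single i 1 : Fin 2 → ℕ) j + 1 = ∑ j, k j := sum_sub_single_add hki
      refine .of_neighborsIn hx (ih (hG.mono (neighborsIn_subset _ _ _)) (by omega) (by omega)
        (fun a b => ?_) (le_trans (le_of_eq ?_) ((mul_le_mul_of_nonneg_left hS
          (by linarith : 0 ≤ 1 / 2 + D.η)).trans hdense)))
      · have hab := hbal a b
        have hb : Pi.single (M := fun _ => ℕ) i 1 b ≤ 1 := by
          rw [Pi.single_apply]
          split_ifs <;> omega
        rw [Pi.sub_apply, Pi.sub_apply]
        omega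
      · rw [← hsub, pow_succ, pow_succ]
        field_simp
    · have hS' : 2 ^ (∑ i, k i) * Real.exp (-(2 * D.η * n)) ≤ #S := by
        refine le_trans ?_ hS
        rw [Real.exp_neg]
        gcongr
        exact D.one_add_pow_le_exp hrn
      exact D.hasMonoClique_of_regular hn hG (by omega) hsum' hbal'
        (hG.mul_card_le_card_neighborsIn (fun i x hx => (hdense i x hx).le)
          (D.one_le_mul_card hn (by omega) hS')) hS'

/-- The exponential factor that is gained over the Erdős–Szekeres bound `2 ^ ∑ i, k i`: the first
term of the minimum comes from balanced clique sizes, the second one from unbalanced ones. -/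
noncomputable def gain : ℝ := min (D.η / (4 * D.M)) ((1 / (4 * D.M)) ^ 2 / 2)

lemma gain_pos : 0 < D.gain := by
  have hη := D.η_pos
  have hM := D.M_pos
  exact lt_min (by positivity) (by positivity)

lemma exp_gain_mul_le {s r : ℕ} (h : 1 / (4 * D.M) * (s : ℝ) ≤ r) :
    Real.exp (D.gain * s) ≤ (1 + 2 * D.η) ^ r := by
  have hη := D.η_pos
  have hη' := D.η_le
  have hexp : Real.exp D.η ≤ 1 + 2 * D.η := by
    refine (Real.exp_bound_div_one_sub_of_interval hη.le (by linarith)).trans ?_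
    rw [div_le_iff₀ (by linarith)]
    nlinarith
  calc Real.exp (D.gain * s) ≤ Real.exp (r * D.η) := by
        rw [Real.exp_le_exp]
        calc D.gain * s ≤ D.η / (4 * D.M) * s := by
              gcongr
              exact min_le_left _ _
          _ = 1 / (4 * D.M) * s * D.η := by ring
          _ ≤ r * D.η := by gcongr
    _ = Real.exp D.η ^ r := Real.exp_nat_mul _ _
    _ ≤ (1 + 2 * D.η) ^ r := by gcongr

lemma hasMonoClique_of_gain (hG : IsColoring G S) (hM : 16 * D.M ≤ ∑ i, k i)
    (hw : 2 * D.M * D.w ^ 2 / D.η ≤ ↑(∑ i, k i))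
    (hS : 2 ^ (∑ i, k i) * Real.exp (-(D.gain * ↑(∑ i, k i))) ≤ #S) : HasMonoClique G k S := by
  set s := ∑ i, k i
  have hM₀ := D.M_pos
  obtain ⟨r, hlt, hle⟩ : ∃ r, s ≤ 4 * D.M * r ∧ 4 * D.M * r ≤ s + 4 * D.M := by
    refine ⟨s / (4 * D.M) + 1, (Nat.lt_mul_div_succ s ?_).le, ?_⟩
    · linarith [D.twelve_le_M]
    · rw [mul_add_one]
      exact Nat.add_le_add_right (Nat.mul_div_le _ _) _
  have hsr' : (s : ℝ) ≤ 4 * D.M * r := by exact_mod_cast hlt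
  have hsr : 1 / (4 * D.M) * (s : ℝ) ≤ r := by
    rwa [one_div_mul_eq_div, div_le_iff₀' (by positivity)]
  by_cases! hbal : ∀ i j, k i + r ≤ k j + 2 * r
  · refine D.hasMonoClique_of_balanced (n := 2 * r) ?_ r hG ?_ ?_ hbal (le_trans ?_ hS)
    · push_cast
      rw [div_le_iff₀ D.η_pos] at hw
      nlinarith [mul_le_mul_of_nonneg_right hsr' D.η_pos.le]
    · have hr : 4 ≤ r := by nlinarith [D.twelve_le_M]
      change D.M * (2 * r) + r ≤ s
      nlinarith [Nat.mul_le_mul_left D.M hr, Nat.mul_le_mul_right r D.twelve_le_M]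
    · exact hlt.trans_eq (by ring)
    · rw [Real.exp_neg]
      gcongr
      exact D.exp_gain_mul_le hsr
  · obtain ⟨i, j, hij⟩ := hbal
    have hdiff : (k j : ℝ) + r ≤ k i := by
      have hij' : k j + r ≤ k i := by omega
      exact_mod_cast hij'
    refine .of_mul_sum_le_abs_sub hG (c := 1 / (4 * D.M)) (by positivity) (hsr.trans ?_)
      (le_trans ?_ hS)
    · calc (r : ℝ) ≤ k i - k j := by linarith
        _ ≤ |(k i : ℝ) - k j| := le_abs_self _
        _ ≤ |(k 0 : ℝ) - k 1| := by fin_cases i <;> fin_cases j <;> simp [abs_sub_comm]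
    · gcongr
      exact min_le_right _ _

end DescentParams

theorem exists_hasMonoClique_of_two_pow_mul_exp_le :
    ∃ ε > 0, ∀ᶠ s : ℕ in atTop, ∀ {V : Type*} {G : Fin 2 → SimpleGraph V} {S : Finset V}
      {k : Fin 2 → ℕ}, IsColoring G S → ∑ i, k i = s → 2 ^ s * Real.exp (-(ε * s)) ≤ #S →
        HasMonoClique G k S := by
  obtain ⟨D⟩ := DescentParams.nonempty
  refine ⟨D.gain, D.gain_pos, ?_⟩
  filter_upwards [eventually_ge_atTop (16 * D.M),
    tendsto_natCast_atTop_atTop.eventually_ge_atTop (2 * D.M * D.w ^ 2 / D.η)] with s hM hw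
  rintro V G S k hG rfl hS
  exact D.hasMonoClique_of_gain hG hM hw hS

/-! ### The on-line Ramsey game -/

section Game

variable {q : ℕ} {Q R : History q → Prop} {h h' : History q} {n m : ℕ}

/-- From the history `h`, Builder can enforce within `n` further rounds that the history has the
property `Q`. -/
inductive CanForce (Q : History q → Prop) : ℕ → History q → Prop
  | of_holds {n : ℕ} {h : History q} : Q h → CanForce Q n h
  | of_edge {n : ℕ} {h : History q} (e : Sym2 ℕ) : ¬ e.IsDiag → e ∉ h.map Prod.fst →
      (∀ i, CanForce Q n (h ++ [(e, i)])) → CanForce Q (n + 1) h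

namespace CanForce

lemma mono (hf : CanForce Q n h) (hnm : n ≤ m) : CanForce Q m h := by
  induction hf generalizing m with
  | of_holds hQ => exact .of_holds hQ
  | of_edge e hdiag hnew _ ih =>
    obtain ⟨m, rfl⟩ := Nat.exists_eq_add_of_le' ((Nat.le_add_left 1 _).trans hnm)
    exact .of_edge e hdiag hnew fun i => ih i (Nat.le_of_add_le_add_right hnm)

lemma trans (hf : CanForce Q n h) (hQR : ∀ h, Q h → CanForce R m h) : CanForce R (n + m) h := by
  induction hf with
  | of_holds hQ => exact (hQR _ hQ).mono (Nat.le_add_left _ _)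
  | of_edge e hdiag hnew _ ih =>
    rw [add_right_comm]
    exact .of_edge e hdiag hnew ih

lemma imp (hf : CanForce Q n h) (hQR : ∀ h, Q h → R h) : CanForce R n h :=
  hf.trans fun h hQ => .of_holds (n := 0) (hQR h hQ)

end CanForce

lemma canForce_presented (E : Finset (Sym2 ℕ)) (hE : ∀ e ∈ E, ¬ e.IsDiag) (h : History q) :
    CanForce (fun h' => h ⊆ h' ∧ ∀ e ∈ E, ∃ i, (e, i) ∈ h') #E h := by
  induction E using Finset.induction_on generalizing h with
  | empty => exact .of_holds ⟨List.Subset.refl h, by simp⟩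
  | insert e E he ih =>
    rw [forall_mem_insert] at hE
    rw [card_insert_of_notMem he]
    simp only [forall_mem_insert]
    by_cases hmem : e ∈ h.map Prod.fst
    · obtain ⟨⟨e, i⟩, hei, rfl⟩ := List.mem_map.1 hmem
      exact ((ih hE.2 h).mono (Nat.le_succ _)).imp fun h' hh' => ⟨hh'.1, ⟨i, hh'.1 hei⟩, hh'.2⟩
    · refine .of_edge e hE.1 hmem fun i => (ih hE.2 (h ++ [(e, i)])).imp fun h' hh' => ?_
      exact ⟨fun _ he => hh'.1 (List.mem_append_left _ he), ⟨i, hh'.1 (by simp)⟩, hh'.2⟩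

lemma exists_new_edge (h : History q) : ∃ e : Sym2 ℕ, ¬ e.IsDiag ∧ e ∉ h.map Prod.fst := by
  have hinj : Function.Injective fun n : ℕ => s(0, n + 1) := fun a b hab => by
    simpa using hab
  obtain ⟨_, ⟨n, rfl⟩, hn⟩ := (Set.infinite_range_of_injective hinj).exists_notMem_finset
    (h.map Prod.fst).toFinset
  exact ⟨s(0, n + 1), by simp, fun hmem => hn (List.mem_toFinset.2 hmem)⟩

lemma exists_edge_forall_canForce (Q : History q → Prop) (h : History q) :
    ∃ e : Sym2 ℕ, (¬ e.IsDiag ∧ e ∉ h.map Prod.fst) ∧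
      ∀ n, CanForce Q (n + 1) h → ¬ Q h → ∀ i, CanForce Q n (h ++ [(e, i)]) := by
  classical
  by_cases! hex : ∃ n, CanForce Q (n + 1) h ∧ ¬ Q h
  · obtain ⟨hf, hQ⟩ := Nat.find_spec hex
    cases hf with
    | of_holds hQ' => exact absurd hQ' hQ
    | of_edge e hdiag hnew hf =>
      exact ⟨e, ⟨hdiag, hnew⟩, fun n hn hQ i => (hf i).mono (Nat.find_min' hex ⟨hn, hQ⟩)⟩
  · obtain ⟨e, he⟩ := exists_new_edge h
    exact ⟨e, he, fun n hn hQ => absurd (hex n hn) hQ⟩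

lemma exists_builder_of_canForce (hf : CanForce Q n []) :
    ∃ B : History q → Sym2 ℕ, validBuilder B ∧
      ∀ P : History q → Sym2 ℕ → Fin q, ∃ m ≤ n, Q (play B P m) := by
  choose B hB hforce using exists_edge_forall_canForce Q
  refine ⟨B, hB, fun P => ?_⟩
  by_contra! hnever
  have hplay (m : ℕ) (hm : m ≤ n) : CanForce Q (n - m) (play B P m) := by
    induction m with
    | zero => exact hf
    | succ m ih =>
      refine hforce _ _ ?_ (hnever m (by omega)) _
      rw [show n - (m + 1) + 1 = n - m by omega]
      exact ih (by omega)
  have hend := hplay n le_rfl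
  rw [Nat.sub_self] at hend
  cases hend with
  | of_holds hQ => exact hnever n le_rfl hQ

lemma colourGraph_mono (hh : h ⊆ h') (i : Fin q) : colourGraph h i ≤ colourGraph h' i :=
  SimpleGraph.fromEdgeSet_mono fun _ he => hh he

lemma colourGraph_adj_of_mem {u v : ℕ} {i : Fin q} (huv : u ≠ v) (hmem : (s(u, v), i) ∈ h) :
    (colourGraph h i).Adj u v :=
  (SimpleGraph.fromEdgeSet_adj _).2 ⟨hmem, huv⟩

lemma canForce_isColoring (S : Finset ℕ) (h : History q) :
    CanForce (fun h' => h ⊆ h' ∧ IsColoring (colourGraph h') S) ((#S).choose 2) h := by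
  classical
  rw [← Sym2.card_image_offDiag]
  refine (canForce_presented _ ?_ h).imp fun h' hh' => ⟨hh'.1, fun u hu v hv huv => ?_⟩
  · rintro e he
    obtain ⟨⟨u, v⟩, huv, rfl⟩ := mem_image.1 he
    exact (mem_offDiag.1 huv).2.2
  · obtain ⟨i, hi⟩ := hh'.2 s(u, v) (mem_image.2 ⟨(u, v), mem_offDiag.2 ⟨hu, hv, huv⟩, rfl⟩)
    exact ⟨i, colourGraph_adj_of_mem huv hi⟩

lemma canForce_star (x : ℕ) (S : Finset ℕ) (h : History q) :
    CanForce (fun h' => h ⊆ h' ∧ ∀ y ∈ S, y ≠ x → ∃ i, (colourGraph h' i).Adj x y) #S h := by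
  classical
  refine ((canForce_presented ((S.erase x).image fun y => s(x, y)) ?_ h).mono ?_).imp
    fun h' hh' => ⟨hh'.1, fun y hy hyx => ?_⟩
  · rintro e he
    obtain ⟨y, hy, rfl⟩ := mem_image.1 he
    exact (ne_of_mem_erase hy).symm
  · exact card_image_le.trans (card_erase_le)
  · obtain ⟨i, hi⟩ := hh'.2 s(x, y) (mem_image_of_mem _ (mem_erase.2 ⟨hyx, hy⟩))
    exact ⟨i, colourGraph_adj_of_mem hyx.symm hi⟩

lemma HasMonoClique.exists_containsCopy {G : Fin q → SimpleGraph ℕ} {t : ℕ} {S : Finset ℕ}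
    (hG : HasMonoClique G (fun _ => t) S) : ∃ i, containsCopy (⊤ : SimpleGraph (Fin t)) (G i) := by
  obtain ⟨i, A, -, hclique, hcard⟩ := hG
  obtain ⟨B, hB, hBcard⟩ := exists_subset_card_eq hcard
  let f := B.orderEmbOfFin hBcard
  refine ⟨i, f, f.injective, fun u v huv => ?_⟩
  exact hclique (hB (B.orderEmbOfFin_mem hBcard u)) (hB (B.orderEmbOfFin_mem hBcard v))
    (f.injective.ne huv)

lemma exists_isMultiBook_card_add_one {V κ : Type*} [Fintype κ] {G : κ → SimpleGraph V}
    {A : κ → Finset V} {X : Finset V} {x : V} {b : ℕ} (hκ : 2 ≤ Fintype.card κ)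
    (hA : IsMultiBook G A X) (hx : x ∈ X) (hstar : ∀ y ∈ X, y ≠ x → ∃ i, (G i).Adj x y)
    (hX : Fintype.card κ * b ≤ #X) :
    ∃ (A' : κ → Finset V) (X' : Finset V), IsMultiBook G A' X' ∧
      ∑ i, #(A' i) = ∑ i, #(A i) + 1 ∧ #X' = b := by
  classical
  obtain ⟨j, hj⟩ : ∃ j, b ≤ #(neighborsIn (G j) x X) := by
    by_contra! hlt
    have hsum : ∑ i, (#(neighborsIn (G i) x X) + 1) ≤ ∑ _i : κ, b := sum_le_sum fun i _ => hlt i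
    have hcard := card_le_sum_neighborsIn_add_one hstar
    simp only [sum_add_distrib, sum_const, card_univ, smul_eq_mul, mul_one] at hsum
    omega
  obtain ⟨X', hX', hcard⟩ := exists_subset_card_eq hj
  exact ⟨_, X', hA.insert hx hX', sum_update_eq_sum_add (fun _ => card) A
    (card_insert_of_notMem (hA.notMem_spine hx j)), hcard⟩

/-- Builder's strategy: extend the spines of a multicolour book by one vertex at a time, joining it
to all pages, and finally present all edges between the remaining pages. -/
lemma canForce_of_isMultiBook {t r : ℕ} (hr : 0 < r)
    (hramsey : ∀ (G : Fin q → SimpleGraph ℕ) (k : Fin q → ℕ) (S : Finset ℕ), IsColoring G S →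
      ∑ i, k i + m = q * t → r ≤ #S → HasMonoClique G k S)
    (hq : 2 ≤ q) (hmt : m ≤ t) (a : ℕ) {A : Fin q → Finset ℕ}
    {X : Finset ℕ} (ha : ∑ i, #(A i) + a = m) (hA : IsMultiBook (colourGraph h) A X)
    (hX : #X = q ^ a * r) :
    CanForce (fun h' => ∃ i, containsCopy (⊤ : SimpleGraph (Fin t)) (colourGraph h' i))
      (2 * (q ^ a * r) + r.choose 2) h := by
  classical
  induction a generalizing h A X with
  | zero =>
    rw [pow_zero, one_mul] at hX ⊢
    rw [← hX]
    refine ((canForce_isColoring X h).imp fun h' ⟨hh', hcol⟩ => ?_).mono (Nat.le_add_left _ _)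
    have hAt (i) : #(A i) ≤ t :=
      (single_le_sum (f := fun i => #(A i)) (fun _ _ => Nat.zero_le _) (mem_univ i)).trans
        (by omega)
    have hsum : ∑ i, (t - #(A i)) + ∑ i, #(A i) = q * t := by
      rw [← sum_add_distrib, sum_congr rfl fun i _ => Nat.sub_add_cancel (hAt i), sum_const,
        card_univ, Fintype.card_fin, smul_eq_mul]
    exact HasMonoClique.exists_containsCopy (S := univ.biUnion A ∪ X)
      (.of_isMultiBook (hA.mono_graph (colourGraph_mono hh'))
        (hramsey _ (fun i => t - #(A i)) X hcol (by omega) hX.ge)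
        (fun i => (subset_biUnion_of_mem A (mem_univ i)).trans subset_union_left)
        subset_union_right fun i => le_add_tsub)
  | succ a ih =>
    rw [pow_succ', mul_assoc] at hX
    obtain ⟨x, hx⟩ := card_pos.1 (hX ▸ (by positivity : 0 < q * (q ^ a * r)))
    have hforce : CanForce (fun h' => ∃ i, containsCopy (⊤ : SimpleGraph (Fin t))
        (colourGraph h' i)) (#X + (2 * (q ^ a * r) + r.choose 2)) h := by
      refine (canForce_star x X h).trans fun h' ⟨hh', hstar⟩ => ?_
      obtain ⟨A', X', hA', hsum, hcard⟩ := exists_isMultiBook_card_add_one (b := q ^ a * r)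
        (by rwa [Fintype.card_fin]) (hA.mono_graph (colourGraph_mono hh')) hx hstar
        (by rw [Fintype.card_fin, hX])
      exact ih (by omega) hA' hcard
    refine hforce.mono ?_
    rw [hX, pow_succ', mul_assoc]
    have hq' := Nat.mul_le_mul_right (q ^ a * r) hq
    omega

theorem onlineRamsey_top_le {t r : ℕ} (hr : 0 < r)
    (hramsey : ∀ (G : Fin q → SimpleGraph ℕ) (k : Fin q → ℕ) (S : Finset ℕ), IsColoring G S →
      ∑ i, k i + m = q * t → r ≤ #S → HasMonoClique G k S)
    (hq : 2 ≤ q) (hmt : m ≤ t) :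
    onlineRamsey q (⊤ : SimpleGraph (Fin t)) ≤ 2 * (q ^ m * r) + r.choose 2 :=
  Nat.sInf_le (exists_builder_of_canForce (canForce_of_isMultiBook hr hramsey hq hmt m
    (by simp) (isMultiBook_empty _ _) (card_range _)))

end Game

/-! ### Asymptotics -/

lemma eventually_mul_exp_le (C : ℝ) {ε ε' : ℝ} (hε : ε' < ε) :
    ∀ᶠ t : ℕ in atTop, C * Real.exp (-(ε * t)) ≤ Real.exp (-(ε' * t)) := by
  have hexp : Tendsto (fun t : ℕ => Real.exp ((ε - ε') * t)) atTop atTop :=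
    Real.tendsto_exp_atTop.comp
      (tendsto_natCast_atTop_atTop.const_mul_atTop (sub_pos.2 hε))
  filter_upwards [hexp.eventually_ge_atTop C] with t ht
  calc C * Real.exp (-(ε * t)) ≤ Real.exp ((ε - ε') * t) * Real.exp (-(ε * t)) := by gcongr
    _ = Real.exp (-(ε' * t)) := by
        rw [← Real.exp_add]
        ring_nf

lemma eventually_exp_neg_le_rpow {ε : ℝ} (hε : 0 < ε) :
    ∀ᶠ x : ℝ in atTop,
      Real.exp (-(ε * x)) ≤ x ^ (-(1 * Real.log x / Real.log (Real.log x))) := by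
  filter_upwards [(Real.isLittleO_pow_log_id_atTop (n := 2)).bound hε, eventually_gt_atTop 0,
    (Real.tendsto_log_atTop.comp Real.tendsto_log_atTop).eventually_ge_atTop 1]
    with x hlog hx hloglog
  rw [Real.norm_of_nonneg (sq_nonneg _), id_eq, Real.norm_of_nonneg hx.le] at hlog
  rw [Real.rpow_def_of_pos hx, Real.exp_le_exp, mul_neg, neg_le_neg_iff]
  calc Real.log x * (1 * Real.log x / Real.log (Real.log x))
      = Real.log x ^ 2 / Real.log (Real.log x) := by ring
    _ ≤ Real.log x ^ 2 := div_le_self (sq_nonneg _) hloglog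
    _ ≤ ε * x := hlog

lemma onlineRamsey_top_le_mul_four_pow {t : ℕ} {x : ℝ} (hx : x ≤ 1) (htx : 1 ≤ 2 ^ t * x)
    (hramsey : ∀ (G : Fin 2 → SimpleGraph ℕ) (k : Fin 2 → ℕ) (S : Finset ℕ), IsColoring G S →
      ∑ i, k i = t → 2 ^ t * x ≤ #S → HasMonoClique G k S) :
    (onlineRamsey 2 (⊤ : SimpleGraph (Fin t)) : ℝ) ≤ 8 * x * 4 ^ t := by
  set r := ⌈2 ^ t * x⌉₊
  have hr_pos : 0 < r := Nat.ceil_pos.2 (one_pos.trans_le htx)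
  have hr_le : (r : ℝ) ≤ 2 * (2 ^ t * x) := by
    linarith [Nat.ceil_lt_add_one (zero_le_one.trans htx)]
  have hchoose : (r.choose 2 : ℝ) ≤ r ^ 2 := mod_cast Nat.choose_le_pow r 2
  have hx_pos : 0 < x := pos_of_mul_pos_right (one_pos.trans_le htx) (by positivity)
  have hfour : (2 : ℝ) ^ t * 2 ^ t = 4 ^ t := by rw [← mul_pow]; norm_num
  have honline : onlineRamsey 2 (⊤ : SimpleGraph (Fin t)) ≤ 2 * (2 ^ t * r) + r.choose 2 :=
    onlineRamsey_top_le hr_pos (fun G k S hG hk hS =>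
      hramsey G k S hG (by omega) (Nat.ceil_le.1 hS)) le_rfl le_rfl
  calc (onlineRamsey 2 (⊤ : SimpleGraph (Fin t)) : ℝ)
      ≤ 2 * (2 ^ t * r) + r.choose 2 := mod_cast honline
    _ ≤ 2 * (2 ^ t * (2 * (2 ^ t * x))) + (2 * (2 ^ t * x)) ^ 2 := by
        grw [hchoose, hr_le]
    _ = 4 * (2 ^ t * 2 ^ t) * (x + x * x) := by ring
    _ ≤ 4 * (2 ^ t * 2 ^ t) * (x + x * 1) := by gcongr
    _ = 8 * x * 4 ^ t := by rw [hfour]; ring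

theorem online_ramsey_upper_general :
    ∃ ε > 0, ∀ᶠ t : ℕ in atTop,
      (onlineRamsey 2 (⊤ : SimpleGraph (Fin t)) : ℝ) ≤ Real.exp (-(ε * t)) * 4 ^ t := by
  obtain ⟨ε, hε, hramsey⟩ := exists_hasMonoClique_of_two_pow_mul_exp_le
  let δ := min ε (1 / 2)
  have hδ : 0 < δ := lt_min hε (by norm_num)
  refine ⟨δ / 2, half_pos hδ, ?_⟩
  filter_upwards [hramsey, eventually_mul_exp_le 8 (half_lt_self hδ)] with t ht hexp
  have hone : 1 ≤ 2 ^ t * Real.exp (-(δ * t)) := by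
    have htwo : 1 ≤ 2 * Real.exp (-δ) := by
      linarith [Real.add_one_le_exp (-δ), min_le_right ε (1 / 2)]
    calc 1 ≤ (2 * Real.exp (-δ)) ^ t := one_le_pow₀ htwo
      _ = 2 ^ t * Real.exp (-(δ * t)) := by rw [mul_pow, ← Real.exp_nat_mul]; ring_nf
  refine (onlineRamsey_top_le_mul_four_pow (x := Real.exp (-(δ * t)))
    (Real.exp_le_one_iff.2 (by simp only [Left.neg_nonpos_iff]; positivity)) hone
    fun G k S hG hk hS => ht hG hk (le_trans ?_ hS)).trans (by gcongr)
  gcongr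
  exact min_le_left _ _

/-- There is `c > 0` such that for all sufficiently large `t`,
`r̃(t) ≤ t^{-c log t / log log t} * 4^t`. -/
theorem online_ramsey_upper :
    ∃ c : ℝ, 0 < c ∧ ∃ t₀ : ℕ, ∀ t : ℕ, t₀ ≤ t →
      (onlineRamsey 2 (⊤ : SimpleGraph (Fin t)) : ℝ) ≤
        (t : ℝ) ^ (-(c * Real.log t / Real.log (Real.log t))) * 4 ^ t := by
  obtain ⟨ε, hε, hupper⟩ := online_ramsey_upper_general
  refine ⟨1, one_pos, eventually_atTop.1 ?_⟩
  filter_upwards [hupper, tendsto_natCast_atTop_atTop.eventually (eventually_exp_neg_le_rpow hε)]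
    with t ht hcompare
  exact ht.trans (by gcongr)
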